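/- arXiv:1609.02527 — 2 statements merged into one kernel-verified Lean document; each statement's English description precedes it below -/
import Mathlib

section
/- Spectral gap for the tagged-particle exclusion process in finite volume: For every ρ ∈ (0,1) there exists a constant C_S(d,ρ) < ∞, which may be chosen nondecreasing in ρ, such that for every integer ℓ ≥ 1 and every function f : Ω_ℓ → ℝ, one has ⟨(f − ⟨f⟩_{ℓ,ρ})²⟩_{ℓ,ρ} ≤ C_S ℓ² Σ_{e ∈ 𝔹_ℓ} ⟨a_e (f^e − f)²⟩_{ℓ,ρ}. -/
open Finset

noncomputable section

/-- The box `B_ℓ = {−ℓ,…,ℓ}^d` in `ℤ^d`. -/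
def Box (d ℓ : ℕ) : Finset (Fin d → ℤ) :=
  Finset.Icc (fun _ => -(ℓ : ℤ)) (fun _ => (ℓ : ℤ))

/-- A site of the box `B_ℓ`. -/
abbrev Site (d ℓ : ℕ) := {x : Fin d → ℤ // x ∈ Box d ℓ}

/-- A particle configuration `η ∈ {0,1}^{B_ℓ}`. -/
abbrev Config (d ℓ : ℕ) := Site d ℓ → Bool

/-- A state `(x,η)` of the tagged-particle exclusion process in `B_ℓ`; the constraint
`η(x) = 1` defining `Ω_ℓ` is imposed on the support of the reversible measure below. -/
abbrev TState (d ℓ : ℕ) := Site d ℓ × Config d ℓ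

/-- Two sites are neighbours when their Euclidean distance is `1`. -/
abbrev SiteAdj {d ℓ : ℕ} (y z : Site d ℓ) : Prop :=
  (∑ i, ((y : Fin d → ℤ) i - (z : Fin d → ℤ) i) ^ 2) = 1

/-- Number of particles of a configuration. -/
def numParticles {d ℓ : ℕ} (η : Config d ℓ) : ℕ :=
  (Finset.univ.filter fun z => η z = true).card

open scoped Classical in
/-- The finite set `{(x,η) ∈ Ω_ℓ : Σ_{z ∈ B_ℓ} η(z) = ⌊ρ |B_ℓ|⌋}`. -/
def taggedSlice (d ℓ : ℕ) (ρ : ℝ) : Finset (TState d ℓ) :=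
  Finset.univ.filter fun ω =>
    ω.2 ω.1 = true ∧ (numParticles ω.2 : ℤ) = ⌊ρ * ((Box d ℓ).card : ℝ)⌋

/-- Expectation with respect to the uniform probability measure `⟨·⟩_{ℓ,ρ}` on the set
`{(x,η) ∈ Ω_ℓ : Σ_{z ∈ B_ℓ} η(z) = ⌊ρ |B_ℓ|⌋}`. -/
def taggedExp (d ℓ : ℕ) (ρ : ℝ) (g : TState d ℓ → ℝ) : ℝ :=
  (∑ ω ∈ taggedSlice d ℓ ρ, g ω) / ((taggedSlice d ℓ ρ).card : ℝ)

/-- For the edge `e = {y,z}`, the map `f ↦ f^e`, where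
`f^e (x, η) := f (x^e, η^e)`, `x^e` is the image of `x` under the transposition of the
endpoints of `e`, and `η^e (x) = η (x^e)`. -/
def edgeMap {d ℓ : ℕ} (y z : Site d ℓ) (f : TState d ℓ → ℝ) : TState d ℓ → ℝ :=
  fun ω => f (Equiv.swap y z ω.1, ω.2 ∘ Equiv.swap y z)

/-- The exclusion rate `a_e(η) = 1_{η^e ≠ η}` of the edge `e = {y,z}`: it equals `1`
exactly when precisely one endpoint of `e` is occupied. -/
def rate {d ℓ : ℕ} (y z : Site d ℓ) (η : Config d ℓ) : ℝ :=
  if η y ≠ η z then 1 else 0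

/-! Averaging over random transpositions bounds `n` times the variance, `n` being the number of
sites, by the sum of the Dirichlet forms of the exchanges of all pairs of sites, nearby or not.
The task is to pay for these long-range exchanges with nearest-neighbour ones, remembering that
the exclusion rate vanishes between two occupied sites, so that the tagged particle only ever
moves into a hole.

Exchanging the tagged particle at `x` with the contents of `w` is done with the help of a hole
`h`: the contents of `w` are parked at `h`, the tagged particle hops to `w`, and the parked
contents are brought to `x`. Averaging over the `K` holes leaves only exchanges away from the
tagged particle and moves of the tagged particle into a hole, at the price of the factor `n / K`
that makes the constant blow up as the density tends to `1`.

Both kinds of long-range exchange are decomposed along canonical paths in the box, which change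
one coordinate after the other. An exchange away from the tagged particle, where the particles are
indistinguishable, conjugates nearest-neighbour ones, and goes around the tagged particle when the
path meets it: this is where `2 ≤ d` enters. To reach a hole at the end of a path, the hole is
pulled next to the tagged particle, which hops into it, the hole left behind is brought back to
the front, and so on. Each path has `O(ℓ)` sites and each site lies on `O(ℓ n)` paths, so that
Cauchy–Schwarz yields the factor `ℓ²`.
-/

namespace TaggedExclusion

open Equiv
open scoped BigOperators

section Averages

variable {G Ω : Type*} [Group G] [Fintype G] [MulAction G Ω]

lemma sq_expect_le_expect_sq {ι : Type*} (s : Finset ι) (f : ι → ℝ) :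
    (𝔼 i ∈ s, f i) ^ 2 ≤ 𝔼 i ∈ s, f i ^ 2 := by
  simpa only [expect_eq_sum_div_card] using sum_div_card_sq_le_sum_sq_div_card

open scoped Classical in
/-- The average of `F` over the orbit of `ω` under the subgroup `H`: the conditional expectation
of `F`, for the uniform measure on `Ω`, given the `H`-orbits. -/
def orbitAverage (H : Subgroup G) (F : Ω → ℝ) (ω : Ω) : ℝ :=
  𝔼 g with g ∈ H, F (g • ω)

lemma orbitAverage_smul {H : Subgroup G} {h : G} (hh : h ∈ H) (F : Ω → ℝ) (ω : Ω) :
    orbitAverage H F (h • ω) = orbitAverage H F ω := by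
  classical
  refine expect_nbij' (· * h) (· * h⁻¹) (fun g hg => ?_) (fun g hg => ?_) (fun g _ => ?_)
    (fun g _ => ?_) fun g _ => by rw [mul_smul]
  · simpa [H.mul_mem_cancel_right hh] using hg
  · simpa [H.mul_mem_cancel_right (H.inv_mem hh)] using hg
  · simp
  · simp

lemma orbitAverage_sub (H : Subgroup G) (F F' : Ω → ℝ) (ω : Ω) :
    orbitAverage H F ω - orbitAverage H F' ω = orbitAverage H (fun ω => F ω - F' ω) ω := by
  simp only [orbitAverage, expect_sub_distrib]

lemma orbitAverage_bot (F : Ω → ℝ) : orbitAverage (⊥ : Subgroup G) F = F := by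
  classical
  ext ω
  rw [orbitAverage, show univ.filter (· ∈ (⊥ : Subgroup G)) = {1} by ext; simp]
  simp

variable [Fintype Ω]

lemma sum_orbitAverage_mul {H : Subgroup G} (F : Ω → ℝ) {D : Ω → ℝ}
    (hD : ∀ h ∈ H, ∀ ω, D (h • ω) = D ω) :
    ∑ ω, orbitAverage H F ω * D ω = ∑ ω, F ω * D ω := by
  classical
  have hH : (univ.filter (· ∈ H)).Nonempty := ⟨1, by simp⟩
  calc ∑ ω, orbitAverage H F ω * D ω = 𝔼 g with g ∈ H, ∑ ω, F (g • ω) * D (g • ω) := by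
        rw [expect_sum_comm]
        refine sum_congr rfl fun ω _ => ?_
        rw [orbitAverage, expect_mul]
        exact expect_congr rfl fun g hg => by rw [hD g (by simpa using hg)]
    _ = 𝔼 g with g ∈ H, ∑ ω, F ω * D ω :=
        expect_congr rfl fun g _ => Equiv.sum_comp (MulAction.toPerm g) fun ω => F ω * D ω
    _ = ∑ ω, F ω * D ω := expect_const hH _

lemma sum_sq_sub_orbitAverage {H K : Subgroup G} (hHK : H ≤ K) (F : Ω → ℝ) :
    ∑ ω, (F ω - orbitAverage K F ω) ^ 2 = ∑ ω, (F ω - orbitAverage H F ω) ^ 2 +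
      ∑ ω, (orbitAverage H F ω - orbitAverage K F ω) ^ 2 := by
  have orthogonal := sum_orbitAverage_mul (H := H) F
    (D := fun ω => orbitAverage H F ω - orbitAverage K F ω) fun h hh ω => by
      rw [orbitAverage_smul hh, orbitAverage_smul (hHK hh)]
  rw [← sub_eq_zero, ← sum_sub_distrib] at orthogonal
  rw [← sum_add_distrib, ← sub_eq_zero, ← sum_sub_distrib, ← mul_zero (-2), ← orthogonal, mul_sum]
  exact sum_congr rfl fun ω _ => by ring

lemma sum_orbitAverage_sq_le (H : Subgroup G) (F : Ω → ℝ) :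
    ∑ ω, orbitAverage H F ω ^ 2 ≤ ∑ ω, F ω ^ 2 := by
  have key := sum_orbitAverage_mul (H := H) (fun ω => F ω ^ 2) (D := fun _ => 1) fun _ _ _ => rfl
  simp only [mul_one] at key
  exact (sum_le_sum fun ω _ => sq_expect_le_expect_sq _ _).trans_eq key

end Averages

section ExchangeForm

variable {V Ω : Type*} [DecidableEq V] [MulAction (Perm V) Ω] [Fintype Ω]

/-- The Dirichlet form of the exchange of the contents of `u` and `w`. -/
def exchangeForm (F : Ω → ℝ) (u w : V) : ℝ :=
  ∑ ω, (F (swap u w • ω) - F ω) ^ 2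

lemma exchangeForm_nonneg (F : Ω → ℝ) (u w : V) : 0 ≤ exchangeForm F u w :=
  sum_nonneg fun _ _ => sq_nonneg _

lemma exchangeForm_self (F : Ω → ℝ) (u : V) : exchangeForm F u u = 0 := by
  simp [exchangeForm, ← Perm.one_def]

end ExchangeForm

section RandomTranspositions

variable {V Ω : Type*}

/-- The permutations of `V` that move only points of `S`. -/
def permsOn (S : Finset V) : Subgroup (Perm V) :=
  fixingSubgroup (Perm V) (S : Set V)ᶜ

lemma mem_permsOn {S : Finset V} {τ : Perm V} : τ ∈ permsOn S ↔ ∀ v ∉ S, τ v = v := by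
  simp [permsOn, mem_fixingSubgroup_iff]

lemma permsOn_mono {S T : Finset V} (h : S ⊆ T) : permsOn S ≤ permsOn T := fun _ hτ =>
  mem_permsOn.2 fun v hv => mem_permsOn.1 hτ v fun hS => hv (h hS)

lemma permsOn_empty : permsOn (∅ : Finset V) = ⊥ := by
  ext τ
  simp [mem_permsOn, Subgroup.mem_bot, Equiv.ext_iff]

variable [DecidableEq V]

lemma swap_mem_permsOn {S : Finset V} {u w : V} (hu : u ∈ S) (hw : w ∈ S) :
    swap u w ∈ permsOn S := mem_permsOn.2 fun _ hv =>
  swap_apply_of_ne_of_ne (ne_of_mem_of_not_mem hu hv).symm (ne_of_mem_of_not_mem hw hv).symm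

lemma sum_sum_erase_sum_erase {S : Finset V} {E : V → V → ℝ} (h0 : ∀ u, E u u = 0) :
    ∑ k ∈ S, ∑ u ∈ S.erase k, ∑ w ∈ S.erase k, E u w =
      ((#S : ℝ) - 2) * ∑ u ∈ S, ∑ w ∈ S, E u w := by
  have expand : ∀ k ∈ S, ∑ u ∈ S.erase k, ∑ w ∈ S.erase k, E u w =
      ∑ u ∈ S, ∑ w ∈ S, E u w - ∑ w ∈ S, E k w - ∑ u ∈ S, E u k := fun k hk => by
    simp only [sum_erase_eq_sub hk, sum_sub_distrib, h0]
    ring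
  rw [sum_congr rfl expand, sum_sub_distrib, sum_sub_distrib, sum_const, nsmul_eq_mul,
    sum_comm (f := fun k u => E u k)]
  ring

variable [Fintype V]

open scoped Classical in
lemma expect_permsOn_erase {S : Finset V} {k : V} (hk : k ∈ S) (h : Perm V → ℝ) :
    𝔼 τ with τ ∈ permsOn S, h τ =
      𝔼 τ with τ ∈ permsOn (S.erase k), 𝔼 j ∈ S, h (swap k j * τ) := by
  have hfix : ∀ τ ∈ permsOn (S.erase k), τ k = k := fun τ hτ => mem_permsOn.1 hτ k (by simp)
  have hmap : ∀ τ ∈ permsOn S, τ k ∈ S := fun τ hτ => by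
    by_contra hkS
    exact hkS (by rwa [τ.injective (mem_permsOn.1 hτ _ hkS)])
  rw [← expect_product']
  refine expect_nbij' (fun τ => (swap k (τ k) * τ, τ k)) (fun q => swap k q.2 * q.1)
    (fun τ hτ => ?_) (fun q hq => ?_) (fun τ _ => ?_) (fun q hq => ?_) fun τ _ => ?_
  · simp only [mem_filter, mem_univ, true_and] at hτ
    simp only [mem_product, mem_filter, mem_univ, true_and, hmap τ hτ, and_true, mem_permsOn]
    intro v hv
    by_cases hvk : v = k
    · simp [hvk]
    · exact mem_permsOn.1 (mul_mem (swap_mem_permsOn hk (hmap τ hτ)) hτ) v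
        fun hvS => hv (mem_erase.2 ⟨hvk, hvS⟩)
  · simp only [mem_product, mem_filter, mem_univ, true_and] at hq ⊢
    exact mul_mem (swap_mem_permsOn hk hq.2) (permsOn_mono (erase_subset _ _) hq.1)
  · simp [← mul_assoc]
  · simp only [mem_product, mem_filter, mem_univ, true_and] at hq
    ext <;> simp [hfix q.1 hq.1, ← mul_assoc]
  · simp [← mul_assoc]

variable [MulAction (Perm V) Ω]

lemma orbitAverage_permsOn_erase {S : Finset V} {k : V} (hk : k ∈ S) (F : Ω → ℝ) (ω : Ω) :
    orbitAverage (permsOn S) F ω =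
      orbitAverage (permsOn (S.erase k)) (fun ω => 𝔼 j ∈ S, F (swap k j • ω)) ω := by
  simp only [orbitAverage, expect_permsOn_erase hk, mul_smul]

variable [Fintype Ω]

lemma sum_sq_sub_orbitAverage_erase_le {S : Finset V} {k : V} (hk : k ∈ S) (F : Ω → ℝ) :
    ∑ ω, (F ω - orbitAverage (permsOn S) F ω) ^ 2 ≤
      ∑ ω, (F ω - orbitAverage (permsOn (S.erase k)) F ω) ^ 2 +
        𝔼 j ∈ S, exchangeForm F k j := by
  rw [sum_sq_sub_orbitAverage (permsOn_mono (S.erase_subset k))]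
  gcongr
  calc ∑ ω, (orbitAverage (permsOn (S.erase k)) F ω - orbitAverage (permsOn S) F ω) ^ 2
      = ∑ ω, orbitAverage (permsOn (S.erase k))
          (fun ω => F ω - 𝔼 j ∈ S, F (swap k j • ω)) ω ^ 2 := by
        simp only [orbitAverage_permsOn_erase hk, orbitAverage_sub]
    _ ≤ ∑ ω, (F ω - 𝔼 j ∈ S, F (swap k j • ω)) ^ 2 := sum_orbitAverage_sq_le _ _
    _ = ∑ ω, (𝔼 j ∈ S, (F (swap k j • ω) - F ω)) ^ 2 := by
        simp only [expect_sub_distrib, expect_const ⟨k, hk⟩, sub_sq_comm]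
    _ ≤ ∑ ω, 𝔼 j ∈ S, (F (swap k j • ω) - F ω) ^ 2 :=
        sum_le_sum fun ω _ => sq_expect_le_expect_sq _ _
    _ = 𝔼 j ∈ S, exchangeForm F k j := (expect_sum_comm _ _ _).symm

lemma card_mul_sum_sq_sub_orbitAverage_le (S : Finset V) (F : Ω → ℝ) :
    (#S : ℝ) * ∑ ω, (F ω - orbitAverage (permsOn S) F ω) ^ 2 ≤
      ∑ u ∈ S, ∑ w ∈ S, exchangeForm F u w := by
  induction hn : #S generalizing S with
  | zero => simp [card_eq_zero.1 hn]
  | succ n ih =>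
    set N := ∑ ω, (F ω - orbitAverage (permsOn S) F ω) ^ 2
    set T := ∑ u ∈ S, ∑ w ∈ S, exchangeForm F u w with hT
    have hT0 : 0 ≤ T := sum_nonneg fun _ _ => sum_nonneg fun _ _ => exchangeForm_nonneg _ _ _
    have one_point : ∀ k ∈ S, (n : ℝ) * N ≤
        ∑ u ∈ S.erase k, ∑ w ∈ S.erase k, exchangeForm F u w +
          n * 𝔼 j ∈ S, exchangeForm F k j := fun k hk => by
      have hle := ih (S.erase k) (by rw [card_erase_of_mem hk, hn]; rfl)
      nlinarith [sum_sq_sub_orbitAverage_erase_le hk F, (n.cast_nonneg : (0 : ℝ) ≤ n)]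
    have all_points : ((n : ℝ) + 1) * (n * N) ≤ (n - 1) * T + n * (T / (n + 1)) := by
      have hsum := sum_le_sum one_point
      rw [sum_add_distrib, sum_sum_erase_sum_erase (exchangeForm_self F), sum_const, nsmul_eq_mul,
        ← mul_sum] at hsum
      simp only [expect_eq_sum_div_card, ← sum_div] at hsum
      rw [← hT, hn] at hsum
      push_cast at hsum
      linarith
    have hcoef : (n : ℝ) * (T / (n + 1)) ≤ T := by
      rw [← mul_div_assoc, div_le_iff₀ (by positivity)]
      nlinarith
    push_cast
    rcases n.eq_zero_or_pos with rfl | hpos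
    · obtain ⟨k, rfl⟩ := card_eq_one.1 hn
      have hN : N ≤ 0 := by
        simpa [permsOn_empty, orbitAverage_bot, exchangeForm_self] using
          sum_sq_sub_orbitAverage_erase_le (mem_singleton_self k) F
      simpa using hN.trans hT0
    · have hn0 : (0 : ℝ) < n := by exact_mod_cast hpos
      exact le_of_mul_le_mul_left (by linarith) hn0

theorem card_mul_sum_sq_sub_expect_le [MulAction.IsPretransitive (Perm V) Ω] (F : Ω → ℝ) :
    (Fintype.card V : ℝ) * ∑ ω, (F ω - 𝔼 ω', F ω') ^ 2 ≤ ∑ u, ∑ w : V, exchangeForm F u w := by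
  have mean : ∀ ω, orbitAverage (permsOn (univ : Finset V)) F ω = 𝔼 ω', F ω' := fun ω => by
    have constant : ∀ ω', orbitAverage (permsOn (univ : Finset V)) F ω' =
        orbitAverage (permsOn univ) F ω := fun ω' => by
      obtain ⟨τ, rfl⟩ := MulAction.exists_smul_eq (Perm V) ω ω'
      exact orbitAverage_smul (mem_permsOn.2 (by simp)) F ω
    have key := sum_orbitAverage_mul (H := permsOn (univ : Finset V)) F (D := fun _ => 1)
      fun _ _ _ => rfl
    simp only [mul_one, constant] at key
    rw [Fintype.expect_eq_sum_div_card, ← key]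
    have : Nonempty Ω := ⟨ω⟩
    simp
  simpa only [mean, card_univ] using card_mul_sum_sq_sub_orbitAverage_le (univ : Finset V) F

end RandomTranspositions

section Increments

lemma sqrt_sum_add_sq_le {ι : Type*} (s : Finset ι) (f g : ι → ℝ) :
    √(∑ i ∈ s, (f i + g i) ^ 2) ≤ √(∑ i ∈ s, f i ^ 2) + √(∑ i ∈ s, g i ^ 2) := by
  simpa [Real.sqrt_eq_rpow] using Real.Lp_add_le s f g one_le_two

variable {G Ω : Type*} [Group G] [MulAction G Ω] (F : Ω → ℝ)

/-- The `ℓ²`-norm over `Y` of the increment of `F` under `g`. It is subadditive along products in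
`G`, which turns a factorisation of `g` into a bound on its increment. -/
def incr (Y : Finset Ω) (g : G) : ℝ :=
  √(∑ ω ∈ Y, (F (g • ω) - F ω) ^ 2)

variable {F} {Y Z : Finset Ω}

lemma incr_nonneg (g : G) : 0 ≤ incr F Y g := Real.sqrt_nonneg _

lemma incr_sq (g : G) : incr F Y g ^ 2 = ∑ ω ∈ Y, (F (g • ω) - F ω) ^ 2 :=
  Real.sq_sqrt (sum_nonneg fun _ _ => sq_nonneg _)

lemma incr_one : incr F Y (1 : G) = 0 := by simp [incr]

lemma incr_mono (h : Y ⊆ Z) (g : G) : incr F Y g ≤ incr F Z g :=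
  Real.sqrt_le_sqrt (sum_le_sum_of_subset_of_nonneg h fun _ _ _ => sq_nonneg _)

lemma incr_mul_le {g₁ : G} (g₂ : G) (h : ∀ ω ∈ Y, g₁ • ω ∈ Z) :
    incr F Y (g₂ * g₁) ≤ incr F Y g₁ + incr F Z g₂ := by
  classical
  calc incr F Y (g₂ * g₁)
      = √(∑ ω ∈ Y, ((F (g₁ • ω) - F ω) + (F (g₂ • g₁ • ω) - F (g₁ • ω))) ^ 2) := by
        simp only [incr, mul_smul, sub_add_sub_cancel']
    _ ≤ incr F Y g₁ + √(∑ ω ∈ Y, (F (g₂ • g₁ • ω) - F (g₁ • ω)) ^ 2) := sqrt_sum_add_sq_le ..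
    _ = incr F Y g₁ + incr F (Y.image (g₁ • ·)) g₂ := by
        rw [incr, incr, sum_image (MulAction.injective g₁).injOn]
    _ ≤ incr F Y g₁ + incr F Z g₂ := by
        gcongr
        exact incr_mono (image_subset_iff.2 h) g₂

end Increments

section TaggedConfig

variable {V : Type*} [Fintype V] {N : ℕ}

/-- A configuration of `N` indistinguishable particles on `V`, at the sites where `occ` is `true`,
one of which, at `tag`, is tagged. -/
@[ext]
structure TaggedConfig (V : Type*) [Fintype V] (N : ℕ) where
  tag : V
  occ : V → Bool
  occ_tag : occ tag = true
  card_occ : #{v | occ v = true} = N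

namespace TaggedConfig

instance : Fintype (TaggedConfig V N) := by
  classical
  exact Fintype.ofInjective (fun ω => (ω.tag, ω.occ)) fun ω ω' h =>
    TaggedConfig.ext (congrArg Prod.fst h) (congrArg Prod.snd h)

instance : MulAction (Perm V) (TaggedConfig V N) where
  smul τ ω := ⟨τ ω.tag, ω.occ ∘ τ.symm, by simp [ω.occ_tag],
    (card_equiv τ.symm fun v => by simp).trans ω.card_occ⟩
  one_smul _ := rfl
  mul_smul _ _ _ := rfl

lemma tag_smul (τ : Perm V) (ω : TaggedConfig V N) : (τ • ω).tag = τ ω.tag := rfl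

lemma occ_smul (τ : Perm V) (ω : TaggedConfig V N) (v : V) :
    (τ • ω).occ v = ω.occ (τ.symm v) := rfl

instance : MulAction.IsPretransitive (Perm V) (TaggedConfig V N) where
  exists_smul_eq ω ω' := by
    classical
    have hcard : Fintype.card {v // ω.occ v = true} = Fintype.card {v // ω'.occ v = true} := by
      rw [Fintype.card_subtype, Fintype.card_subtype, ω.card_occ, ω'.card_occ]
    let e₀ := Fintype.equivOfCardEq hcard
    let e := e₀.trans (swap (e₀ ⟨ω.tag, ω.occ_tag⟩) ⟨ω'.tag, ω'.occ_tag⟩)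
    have htag : e.extendSubtype ω.tag = ω'.tag := by
      rw [extendSubtype_apply_of_mem e ω.tag ω.occ_tag]
      simp [e]
    have hocc : ∀ u, ω.occ u = ω'.occ (e.extendSubtype u) := fun u => by
      by_cases hu : ω.occ u = true
      · rw [hu, extendSubtype_mem e u hu]
      · rw [Bool.eq_false_iff.2 hu, Bool.eq_false_iff.2 (extendSubtype_not_mem e u hu)]
    exact ⟨e.extendSubtype, TaggedConfig.ext htag (funext fun v => by simp [occ_smul, hocc])⟩

lemma card_holes (ω : TaggedConfig V N) : #{v | ω.occ v = false} = Fintype.card V - N := by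
  have h := card_filter_add_card_filter_not (s := univ) fun v => ω.occ v = true
  simp only [ω.card_occ, Bool.not_eq_true, card_univ] at h
  omega

end TaggedConfig

variable [DecidableEq V]

/-- The configurations with the tagged particle at `x`. -/
def tagAt (x : V) : Finset (TaggedConfig V N) := {ω | ω.tag = x}

/-- The configurations with the tagged particle at `x` and a hole at `h`. -/
def tagHole (x h : V) : Finset (TaggedConfig V N) := {ω | ω.tag = x ∧ ω.occ h = false}

lemma mem_tagAt {x : V} {ω : TaggedConfig V N} : ω ∈ tagAt x ↔ ω.tag = x := by simp [tagAt]

lemma mem_tagHole {x h : V} {ω : TaggedConfig V N} :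
    ω ∈ tagHole x h ↔ ω.tag = x ∧ ω.occ h = false := by simp [tagHole]

lemma tagHole_subset (x h : V) : (tagHole x h : Finset (TaggedConfig V N)) ⊆ tagAt x :=
  fun _ hω => mem_tagAt.2 (mem_tagHole.1 hω).1

lemma tagHole_self (x : V) : (tagHole x x : Finset (TaggedConfig V N)) = ∅ :=
  filter_false_of_mem fun ω _ hω => by simpa [← hω.1, ω.occ_tag] using hω.2

lemma smul_mem_tagAt {τ : Perm V} {x y : V} (hx : τ x = y) :
    ∀ ω ∈ (tagAt x : Finset (TaggedConfig V N)), τ • ω ∈ tagAt y := fun ω hω => by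
  rw [mem_tagAt] at hω ⊢
  rw [TaggedConfig.tag_smul, hω, hx]

lemma smul_mem_tagHole {τ : Perm V} {x y h k : V} (hx : τ x = y) (hh : τ h = k) :
    ∀ ω ∈ (tagHole x h : Finset (TaggedConfig V N)), τ • ω ∈ tagHole y k := fun ω hω => by
  rw [mem_tagHole] at hω ⊢
  rw [TaggedConfig.tag_smul, TaggedConfig.occ_smul, hω.1, hx, ← hh, symm_apply_apply, hω.2]
  exact ⟨rfl, rfl⟩

variable (F : TaggedConfig V N → ℝ)

/-- The cost of exchanging the contents of `a` and `b` when the tagged particle sits at `x`; by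
convention it vanishes if the exchange would move the tagged particle. -/
def bulkCost (x a b : V) : ℝ :=
  if a = x ∨ b = x then 0 else incr F (tagAt x) (swap a b)

/-- The cost of moving the tagged particle from `a` to an empty site `b`. -/
def tagCost (a b : V) : ℝ := incr F (tagHole a b) (swap a b)

/-- The energy of the edge `{a, b}` when the tagged particle sits at `x`. -/
def edgeEnergyAt (x a b : V) : ℝ :=
  ∑ ω ∈ tagAt x, if ω.occ a ≠ ω.occ b then (F (swap a b • ω) - F ω) ^ 2 else 0

/-- The energy of the edge `{a, b}`: its contribution to the Dirichlet form of the exclusion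
process, without the normalisation of the measure. -/
def edgeEnergy (a b : V) : ℝ :=
  ∑ ω, if ω.occ a ≠ ω.occ b then (F (swap a b • ω) - F ω) ^ 2 else 0

lemma edgeEnergyAt_nonneg (x a b : V) : 0 ≤ edgeEnergyAt F x a b :=
  sum_nonneg fun _ _ => by positivity

lemma edgeEnergy_nonneg (a b : V) : 0 ≤ edgeEnergy F a b :=
  sum_nonneg fun _ _ => by positivity

lemma edgeEnergyAt_comm (x a b : V) : edgeEnergyAt F x a b = edgeEnergyAt F x b a := by
  simp only [edgeEnergyAt, swap_comm a b, ne_comm]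

lemma edgeEnergy_comm (a b : V) : edgeEnergy F a b = edgeEnergy F b a := by
  simp only [edgeEnergy, swap_comm a b, ne_comm]

lemma sum_edgeEnergyAt (a b : V) : ∑ x, edgeEnergyAt F x a b = edgeEnergy F a b :=
  sum_fiberwise univ _ _

lemma edgeEnergyAt_le_edgeEnergy (x a b : V) : edgeEnergyAt F x a b ≤ edgeEnergy F a b := by
  rw [← sum_edgeEnergyAt]
  exact single_le_sum (f := fun x => edgeEnergyAt F x a b)
    (fun y _ => edgeEnergyAt_nonneg F y a b) (mem_univ x)

variable {F}

lemma bulkCost_of_ne {x a b : V} (ha : a ≠ x) (hb : b ≠ x) :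
    bulkCost F x a b = incr F (tagAt x) (swap a b) := if_neg (by simp [ha, hb])

lemma bulkCost_nonneg (x a b : V) : 0 ≤ bulkCost F x a b := by
  unfold bulkCost
  split_ifs
  exacts [le_rfl, incr_nonneg _]

lemma tagCost_nonneg (a b : V) : 0 ≤ tagCost F a b := incr_nonneg _

lemma incr_swap_self (Y : Finset (TaggedConfig V N)) (a : V) : incr F Y (swap a a) = 0 := by
  rw [swap_self, ← Perm.one_def, incr_one]

lemma bulkCost_self (x a : V) : bulkCost F x a a = 0 := by
  rw [bulkCost, incr_swap_self, ite_self]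

lemma bulkCost_comm (x a b : V) : bulkCost F x a b = bulkCost F x b a := by
  simp only [bulkCost, swap_comm a b, or_comm]

lemma bulkCost_le_sqrt_edgeEnergyAt (x a b : V) :
    bulkCost F x a b ≤ √(edgeEnergyAt F x a b) := by
  rw [bulkCost]
  split_ifs with hx
  · exact Real.sqrt_nonneg _
  refine Real.sqrt_le_sqrt (sum_le_sum fun ω hω => ?_)
  split_ifs with h
  · exact le_rfl
  · obtain rfl := mem_tagAt.1 hω
    rw [not_or] at hx
    have hfix : swap a b • ω = ω := by
      refine TaggedConfig.ext (swap_apply_of_ne_of_ne (Ne.symm hx.1) (Ne.symm hx.2))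
        (funext fun v => ?_)
      rw [TaggedConfig.occ_smul, symm_swap, swap_apply_def]
      split_ifs with hva hvb
      · rw [hva, not_not.1 h]
      · rw [hvb, not_not.1 h]
      · rfl
    rw [hfix, sub_self, zero_pow two_ne_zero]

lemma tagCost_le_sqrt_edgeEnergy (a b : V) : tagCost F a b ≤ √(edgeEnergy F a b) := by
  refine Real.sqrt_le_sqrt ?_
  rw [edgeEnergy, ← sum_filter]
  refine sum_le_sum_of_subset_of_nonneg (fun ω hω => ?_) fun _ _ _ => sq_nonneg _
  obtain ⟨rfl, hb⟩ := mem_tagHole.1 hω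
  simp [ω.occ_tag, hb]

lemma bulkCost_trans {x b : V} (a c : V) (hb : b ≠ x) :
    bulkCost F x a c ≤ bulkCost F x a b + 2 * bulkCost F x b c := by
  have hab₀ := bulkCost_nonneg (F := F) x a b
  have hbc₀ := bulkCost_nonneg (F := F) x b c
  by_cases hx : a = x ∨ c = x
  · rw [bulkCost, if_pos hx]
    positivity
  obtain ⟨ha, hc⟩ := not_or.1 hx
  rcases eq_or_ne a c with rfl | hac
  · rw [bulkCost_self]
    positivity
  rcases eq_or_ne a b with rfl | hab
  · rw [bulkCost_self]
    linarith
  have conj : swap a c = swap b c * (swap a b * swap b c) := by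
    ext v
    simp only [Perm.mul_apply, swap_apply_def]
    grind
  have hbc : swap b c x = x := swap_apply_of_ne_of_ne hb.symm (Ne.symm hc)
  have hab' : swap a b x = x := swap_apply_of_ne_of_ne (Ne.symm ha) hb.symm
  have outer := incr_mul_le (F := F) (swap b c)
    (smul_mem_tagAt (τ := swap a b * swap b c) (by rw [Perm.mul_apply, hbc, hab']))
  have inner := incr_mul_le (F := F) (swap a b) (smul_mem_tagAt hbc)
  rw [bulkCost_of_ne ha hc, bulkCost_of_ne ha hb, bulkCost_of_ne hb hc]
  rw [← conj] at outer
  linarith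

/-- The contents of `w` are parked at the hole `h` while the tagged particle moves to `w`. -/
lemma incr_tagHole_swap_le (x w h : V) :
    incr F (tagHole x h) (swap x w) ≤
      bulkCost F x h w + tagCost F x w + bulkCost F w x h := by
  have hbulk := bulkCost_nonneg (F := F) x h w
  have htag := tagCost_nonneg (F := F) x w
  have hbulk' := bulkCost_nonneg (F := F) w x h
  rcases eq_or_ne x h with rfl | hxh
  · have : incr F (tagHole x x) (swap x w) = 0 := by simp [incr, tagHole_self]
    linarith
  rcases eq_or_ne x w with rfl | hxw
  · rw [incr_swap_self]
    positivity
  rcases eq_or_ne h w with rfl | hhw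
  · rw [tagCost] at *
    linarith
  have conj : swap x w = swap x h * (swap x w * swap h w) := by
    ext v
    simp only [Perm.mul_apply, swap_apply_def]
    grind
  have park := smul_mem_tagHole (N := N) (swap_apply_of_ne_of_ne hxh hxw) (swap_apply_left h w)
  have move := smul_mem_tagAt (N := N) (swap_apply_left x w)
  have outer := incr_mul_le (F := F) (swap x h) (Y := tagHole x h) (g₁ := swap x w * swap h w)
    fun ω hω => by rw [mul_smul]; exact move _ (tagHole_subset _ _ (park ω hω))
  have inner := incr_mul_le (F := F) (swap x w) park
  have start := incr_mono (F := F) (tagHole_subset x h) (swap h w)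
  rw [bulkCost_of_ne hxh.symm hxw.symm, bulkCost_of_ne hxw hhw, tagCost]
  rw [← conj] at outer
  linarith

end TaggedConfig

section MeanField

variable {V : Type*} [Fintype V] [DecidableEq V] {N : ℕ} {F : TaggedConfig V N → ℝ}

lemma sum_incr_tagHole_sq (x : V) (τ : Perm V) :
    ∑ h, incr F (tagHole x h) τ ^ 2 =
      ((Fintype.card V - N : ℕ) : ℝ) * incr F (tagAt x) τ ^ 2 := by
  simp only [incr_sq, tagHole, ← filter_filter, sum_filter (fun ω => TaggedConfig.occ ω _ = false)]
  rw [sum_comm, mul_sum]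
  refine sum_congr rfl fun ω _ => ?_
  rw [← sum_filter, sum_const, nsmul_eq_mul, ω.card_holes]

lemma card_holes_mul_sum_incr_sq_le :
    ((Fintype.card V - N : ℕ) : ℝ) * ∑ x, ∑ w : V, incr F (tagAt x) (swap x w) ^ 2 ≤
      6 * ∑ x, ∑ a, ∑ b, bulkCost F x a b ^ 2 +
        3 * Fintype.card V * ∑ a, ∑ b, tagCost F a b ^ 2 := by
  have pointwise : ∀ x w h : V, incr F (tagHole x h) (swap x w) ^ 2 ≤
      3 * (bulkCost F x h w ^ 2 + tagCost F x w ^ 2 + bulkCost F w x h ^ 2) := fun x w h => by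
    have hle := pow_le_pow_left₀ (incr_nonneg _) (incr_tagHole_swap_le (F := F) x w h) 2
    nlinarith [sq_nonneg (bulkCost F x h w - tagCost F x w),
      sq_nonneg (bulkCost F x h w - bulkCost F w x h),
      sq_nonneg (tagCost F x w - bulkCost F w x h)]
  calc ((Fintype.card V - N : ℕ) : ℝ) * ∑ x, ∑ w : V, incr F (tagAt x) (swap x w) ^ 2
      = ∑ x, ∑ w : V, ∑ h, incr F (tagHole x h) (swap x w) ^ 2 := by
        simp only [mul_sum, sum_incr_tagHole_sq]
    _ ≤ ∑ x, ∑ w, ∑ h,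
          3 * (bulkCost F x h w ^ 2 + tagCost F x w ^ 2 + bulkCost F w x h ^ 2) := by
        gcongr with x _ w _ h
        exact pointwise x w h
    _ = 3 * (∑ x, ∑ w, ∑ h, bulkCost F x w h ^ 2 +
          ∑ x, ∑ w, (Fintype.card V : ℝ) * tagCost F x w ^ 2 +
          ∑ w, ∑ x, ∑ h, bulkCost F w x h ^ 2) := by
        simp only [← mul_sum, sum_add_distrib, sum_const, nsmul_eq_mul, card_univ]
        simp only [sum_comm (f := fun x w => ∑ h, bulkCost F w x h ^ 2),
          sum_comm (f := fun w h => bulkCost F _ h w ^ 2)]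
    _ = _ := by
        simp only [← mul_sum]
        ring

lemma exchangeForm_le (u w : V) :
    exchangeForm F u w ≤ ∑ x, bulkCost F x u w ^ 2 +
      (incr F (tagAt u) (swap u w) ^ 2 + incr F (tagAt w) (swap w u) ^ 2) := by
  have pointwise : ∀ x, incr F (tagAt x) (swap u w) ^ 2 ≤ bulkCost F x u w ^ 2 +
      ((if x = u then incr F (tagAt u) (swap u w) ^ 2 else 0) +
        if x = w then incr F (tagAt w) (swap w u) ^ 2 else 0) := fun x => by
    rcases eq_or_ne u x with rfl | hu
    · rw [if_pos rfl]
      linarith [sq_nonneg (bulkCost F u u w),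
        show (0 : ℝ) ≤ if u = w then incr F (tagAt w) (swap w u) ^ 2 else 0 by positivity]
    rcases eq_or_ne w x with rfl | hw
    · rw [if_pos rfl, swap_comm u w, if_neg hu.symm]
      linarith [sq_nonneg (bulkCost F w u w)]
    · rw [bulkCost_of_ne hu hw, if_neg hu.symm, if_neg hw.symm, add_zero, add_zero]
  calc exchangeForm F u w = ∑ x, incr F (tagAt x) (swap u w) ^ 2 := by
        simp only [incr_sq]
        exact (sum_fiberwise univ _ _).symm
    _ ≤ _ := sum_le_sum fun x _ => pointwise x
    _ = _ := by simp [sum_add_distrib]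

lemma card_holes_mul_sum_exchangeForm_le :
    ((Fintype.card V - N : ℕ) : ℝ) * ∑ u, ∑ w : V, exchangeForm F u w ≤
      (((Fintype.card V - N : ℕ) : ℝ) + 12) * ∑ x, ∑ a, ∑ b, bulkCost F x a b ^ 2 +
        6 * Fintype.card V * ∑ a, ∑ b, tagCost F a b ^ 2 := by
  have split : ∑ u, ∑ w : V, exchangeForm F u w ≤ ∑ x, ∑ a, ∑ b, bulkCost F x a b ^ 2 +
      2 * ∑ x, ∑ w : V, incr F (tagAt x) (swap x w) ^ 2 := by
    refine (sum_le_sum fun u _ => sum_le_sum fun w _ => exchangeForm_le u w).trans_eq ?_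
    simp only [sum_add_distrib]
    rw [sum_comm (f := fun x w => incr F (tagAt w) (swap w x) ^ 2), ← two_mul]
    rw [sum_comm_cycle]
  nlinarith [card_holes_mul_sum_incr_sq_le (F := F),
    ((Fintype.card V - N).cast_nonneg : (0 : ℝ) ≤ _)]

end MeanField

section PathTransport

variable {V : Type*} [DecidableEq V] (p : ℕ → V)

/-- The product of the successive transpositions along the path `p 0, …, p t`: it carries the
contents of `p 0` to `p t` and moves all the others one step back. -/
def pathCycle : ℕ → Perm V
  | 0 => 1
  | t + 1 => swap (p t) (p (t + 1)) * pathCycle t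

lemma pathCycle_apply_zero (t : ℕ) : pathCycle p t (p 0) = p t := by
  induction t with
  | zero => rfl
  | succ t ih => rw [pathCycle, Perm.mul_apply, ih, swap_apply_left]

variable {p}

lemma pathCycle_apply_of_forall_ne {t : ℕ} {v : V} (hv : ∀ s ≤ t, p s ≠ v) :
    pathCycle p t v = v := by
  induction t with
  | zero => rfl
  | succ t ih =>
    rw [pathCycle, Perm.mul_apply, ih fun s hs => hv s (by omega),
      swap_apply_of_ne_of_ne (hv t (by omega)).symm (hv (t + 1) le_rfl).symm]

lemma pathCycle_succ_eq {t : ℕ} (hp : Set.InjOn p (Set.Iic (t + 2))) :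
    pathCycle p (t + 1) = swap (p t) (p (t + 2)) * (swap (p t) (p (t + 1)) *
      (pathCycle p t * swap (p (t + 1)) (p (t + 2)))) := by
  have hne : ∀ {i j}, i ≤ t + 2 → j ≤ t + 2 → i ≠ j → p i ≠ p j := fun hi hj hij h =>
    hij (hp hi hj h)
  have hfix : ∀ j, t < j → j ≤ t + 2 → pathCycle p t (p j) = p j := fun j hj hj' =>
    pathCycle_apply_of_forall_ne fun s hs => hne (by omega) hj' (by omega)
  have threeCycle : swap (p t) (p (t + 1)) =
      swap (p t) (p (t + 2)) * (swap (p t) (p (t + 1)) * swap (p (t + 1)) (p (t + 2))) := by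
    have : p t ≠ p (t + 1) := hne (by omega) (by omega) (by omega)
    have : p t ≠ p (t + 2) := hne (by omega) le_rfl (by omega)
    have : p (t + 1) ≠ p (t + 2) := hne (by omega) le_rfl (by omega)
    ext v
    simp only [Perm.mul_apply, swap_apply_def]
    grind
  rw [mul_swap_eq_swap_mul, hfix _ (by omega) (by omega), hfix _ (by omega) le_rfl, pathCycle]
  simp only [← mul_assoc] at threeCycle ⊢
  rw [← threeCycle]

variable [Fintype V] {N : ℕ} {F : TaggedConfig V N → ℝ}

lemma incr_pathCycle_inv_le {t : ℕ} {y : V} (hy : ∀ s ≤ t, p s ≠ y) :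
    incr F (tagAt y) (pathCycle p t)⁻¹ ≤ ∑ s ∈ range t, bulkCost F y (p s) (p (s + 1)) := by
  induction t with
  | zero => simp [pathCycle, incr_one]
  | succ t ih =>
    have ht := hy t (by omega)
    have ht' := hy (t + 1) le_rfl
    rw [pathCycle, mul_inv_rev, swap_inv, sum_range_succ, bulkCost_of_ne ht ht',
      add_comm (∑ s ∈ range t, _)]
    exact (incr_mul_le _ (smul_mem_tagAt (swap_apply_of_ne_of_ne ht.symm ht'.symm))).trans
      (add_le_add_right (ih fun s hs => hy s (by omega)) _)

/-- For one more step, the hole is pulled one step back, the tagged particle is carried next to it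
along the shorter path and hops into it, and the hole left behind is returned to the end. -/
lemma incr_pathCycle_le {t : ℕ} (hp : Set.InjOn p (Set.Iic (t + 1))) :
    incr F (tagHole (p 0) (p (t + 1))) (pathCycle p t) ≤
      ∑ s ∈ range t, (bulkCost F (p 0) (p (s + 1)) (p (s + 2)) + tagCost F (p s) (p (s + 1)) +
        bulkCost F (p (s + 1)) (p s) (p (s + 2))) := by
  induction t with
  | zero => simp [pathCycle, incr_one]
  | succ t ih =>
    have hne : ∀ {i j}, i ≤ t + 2 → j ≤ t + 2 → i ≠ j → p i ≠ p j := fun hi hj hij h =>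
      hij (hp hi hj h)
    have h01 : p t ≠ p (t + 1) := hne (by omega) (by omega) (by omega)
    have h12 : p (t + 1) ≠ p (t + 2) := hne (by omega) le_rfl (by omega)
    have h1 : p (t + 1) ≠ p 0 := hne (by omega) (by omega) (by omega)
    have h2 : p (t + 2) ≠ p 0 := hne le_rfl (by omega) (by omega)
    have pull := smul_mem_tagHole (N := N) (swap_apply_of_ne_of_ne h1.symm h2.symm)
      (swap_apply_right (p (t + 1)) (p (t + 2)))
    have carry := smul_mem_tagHole (N := N) (pathCycle_apply_zero p t)
      (pathCycle_apply_of_forall_ne (p := p) (v := p (t + 1))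
        fun s hs => hne (by omega) (by omega) (by omega))
    have hop := smul_mem_tagAt (N := N) (swap_apply_left (p t) (p (t + 1)))
    rw [pathCycle_succ_eq hp, sum_range_succ, bulkCost_of_ne h1 h2, bulkCost_of_ne h01 h12.symm,
      tagCost]
    have restore := incr_mul_le (F := F) (g₁ := swap (p t) (p (t + 1)) *
        (pathCycle p t * swap (p (t + 1)) (p (t + 2)))) (swap (p t) (p (t + 2))) fun ω hω => by
      rw [mul_smul, mul_smul]
      exact hop _ (tagHole_subset _ _ (carry _ (pull ω hω)))
    have hop_le := incr_mul_le (F := F) (swap (p t) (p (t + 1))) fun ω hω => by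
      rw [mul_smul]
      exact carry _ (pull ω hω)
    have carry_le := incr_mul_le (F := F) (pathCycle p t) pull
    have pull_le := incr_mono (F := F) (tagHole_subset (p 0) (p (t + 2)))
      (swap (p (t + 1)) (p (t + 2)))
    linarith [ih (hp.mono (Set.Iic_subset_Iic.2 (by omega)))]

theorem tagCost_le_of_injOn {t : ℕ} (hp : Set.InjOn p (Set.Iic (t + 1))) :
    tagCost F (p 0) (p (t + 1)) ≤ ∑ s ∈ range (t + 1), tagCost F (p s) (p (s + 1)) +
      ∑ s ∈ range t, (bulkCost F (p 0) (p (s + 1)) (p (s + 2)) +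
        bulkCost F (p (s + 1)) (p s) (p (s + 2)) +
        bulkCost F (p (t + 1)) (p s) (p (s + 1))) := by
  have hne : ∀ s ≤ t, p s ≠ p (t + 1) := fun s hs h =>
    absurd (hp (Set.mem_Iic.2 (by omega)) (Set.mem_Iic.2 le_rfl) h) (by omega)
  have hfix := pathCycle_apply_of_forall_ne hne
  have conj : swap (p 0) (p (t + 1)) =
      (pathCycle p t)⁻¹ * (swap (p t) (p (t + 1)) * pathCycle p t) := by
    rw [eq_inv_mul_iff_mul_eq, mul_swap_eq_swap_mul, pathCycle_apply_zero, hfix]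
  have carry := smul_mem_tagHole (N := N) (pathCycle_apply_zero p t) hfix
  have hop := smul_mem_tagAt (N := N) (swap_apply_left (p t) (p (t + 1)))
  have restore := incr_mul_le (F := F) (pathCycle p t)⁻¹ fun ω hω => by
    rw [mul_smul]
    exact hop _ (tagHole_subset _ _ (carry ω hω))
  have hop_le := incr_mul_le (F := F) (swap (p t) (p (t + 1))) carry
  have carry_le := incr_pathCycle_le (F := F) hp
  have restore_le := incr_pathCycle_inv_le (F := F) hne
  rw [← conj, ← tagCost] at restore
  rw [← tagCost] at hop_le
  rw [sum_range_succ]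
  simp only [sum_add_distrib] at carry_le ⊢
  linarith

end PathTransport

section GraphEnergy

variable {V : Type*} [Fintype V] (G : SimpleGraph V) [DecidableRel G.Adj]

/-- The total weight of the edges of `G`, each edge being counted in both directions. -/
def totalEnergy (e : V → V → ℝ) : ℝ := ∑ a, ∑ z ∈ G.neighborFinset a, e a z

/-- The total weight of the edges of `G` with an endpoint adjacent to `v`. -/
def localEnergy (e : V → V → ℝ) (v : V) : ℝ :=
  ∑ a ∈ G.neighborFinset v, ∑ z ∈ G.neighborFinset a, e a z

variable {G} {e e' : V → V → ℝ}

lemma totalEnergy_nonneg (he : ∀ a z, 0 ≤ e a z) : 0 ≤ totalEnergy G e :=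
  sum_nonneg fun _ _ => sum_nonneg fun _ _ => he _ _

lemma localEnergy_nonneg (he : ∀ a z, 0 ≤ e a z) (v : V) : 0 ≤ localEnergy G e v :=
  sum_nonneg fun _ _ => sum_nonneg fun _ _ => he _ _

lemma localEnergy_mono (h : ∀ a z, e a z ≤ e' a z) (v : V) :
    localEnergy G e v ≤ localEnergy G e' v :=
  sum_le_sum fun _ _ => sum_le_sum fun _ _ => h _ _

lemma le_localEnergy (he : ∀ a z, 0 ≤ e a z) (hcomm : ∀ a z, e a z = e z a) {v a z : V}
    (haz : G.Adj a z) (hv : G.Adj v a ∨ G.Adj v z) : e a z ≤ localEnergy G e v := by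
  wlog hva : G.Adj v a generalizing a z
  · rw [hcomm]
    exact this haz.symm hv.symm (hv.resolve_left hva)
  · refine (single_le_sum (f := e a) (fun _ _ => he _ _)
      ((G.mem_neighborFinset a z).2 haz)).trans ?_
    exact single_le_sum (f := fun a => ∑ z ∈ G.neighborFinset a, e a z)
      (fun _ _ => sum_nonneg fun _ _ => he _ _) ((G.mem_neighborFinset v a).2 hva)

lemma sum_localEnergy_le {Δ : ℕ} (hΔ : ∀ v, G.degree v ≤ Δ) (he : ∀ a z, 0 ≤ e a z) :
    ∑ v, localEnergy G e v ≤ Δ * totalEnergy G e :=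
  calc ∑ v, localEnergy G e v
      = ∑ a, ∑ _v ∈ G.neighborFinset a, ∑ z ∈ G.neighborFinset a, e a z :=
        sum_comm' fun v a => by simp [G.adj_comm]
    _ = ∑ a, (G.degree a : ℝ) * ∑ z ∈ G.neighborFinset a, e a z := by
        simp only [sum_const, nsmul_eq_mul, G.card_neighborFinset_eq_degree]
    _ ≤ ∑ a, (Δ : ℝ) * ∑ z ∈ G.neighborFinset a, e a z := by
        gcongr with a
        · exact sum_nonneg fun _ _ => he _ _
        · exact hΔ a
    _ = Δ * totalEnergy G e := (mul_sum ..).symm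

variable [DecidableEq V]

variable (G) in
/-- Any two pairs of vertices are joined by paths with at most `m` vertices, in such a way that
every vertex lies on at most `M` of these paths. -/
def HasCanonicalPaths (m M : ℕ) : Prop :=
  ∃ γ : ∀ u w, G.Path u w, (∀ u w, #(γ u w).1.support.toFinset ≤ m) ∧
    ∀ v, #{q : V × V | v ∈ (γ q.1 q.2).1.support} ≤ M

lemma sum_sq_le_of_le_sum_sqrt {γ : V → V → Finset V} {m M : ℕ} (hm : ∀ u w, #(γ u w) ≤ m)
    (hM : ∀ v, #{q : V × V | v ∈ γ q.1 q.2} ≤ M) {g : V → ℝ} (hg : ∀ v, 0 ≤ g v)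
    {r : V → V → ℝ} (hr : ∀ u w, 0 ≤ r u w) {C : ℝ}
    (hle : ∀ u w, r u w ≤ C * ∑ v ∈ γ u w, √(g v)) :
    ∑ u, ∑ w, r u w ^ 2 ≤ C ^ 2 * m * M * ∑ v, g v := by
  have cauchySchwarz : ∀ u w, r u w ^ 2 ≤ C ^ 2 * m * ∑ v ∈ γ u w, g v := fun u w =>
    calc r u w ^ 2 ≤ (C * ∑ v ∈ γ u w, √(g v)) ^ 2 := pow_le_pow_left₀ (hr u w) (hle u w) 2
      _ ≤ C ^ 2 * (#(γ u w) * ∑ v ∈ γ u w, √(g v) ^ 2) := by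
          rw [mul_pow]
          gcongr
          exact sq_sum_le_card_mul_sum_sq
      _ ≤ C ^ 2 * m * ∑ v ∈ γ u w, g v := by
          simp only [Real.sq_sqrt (hg _), mul_assoc]
          gcongr
          · exact sum_nonneg fun _ _ => hg _
          · exact hm u w
  calc ∑ u, ∑ w, r u w ^ 2
      ≤ ∑ u, ∑ w, C ^ 2 * m * ∑ v ∈ γ u w, g v := by
        gcongr with u _ w
        exact cauchySchwarz u w
    _ = C ^ 2 * m * ∑ q : V × V, ∑ v ∈ γ q.1 q.2, g v := by
        rw [Fintype.sum_prod_type]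
        simp only [mul_sum]
    _ = C ^ 2 * m * ∑ v, ∑ q : V × V with v ∈ γ q.1 q.2, g v := by
        congr 1
        exact sum_comm' (by simp)
    _ ≤ C ^ 2 * m * ∑ v, M * g v := by
        gcongr with v
        rw [sum_const, nsmul_eq_mul]
        gcongr
        · exact hg v
        · exact hM v
    _ = C ^ 2 * m * M * ∑ v, g v := by rw [← mul_sum, mul_assoc _ (M : ℝ)]

end GraphEnergy

section CanonicalPaths

variable {V : Type*} {G : SimpleGraph V}

variable (G) in
/-- Any two neighbours `a`, `c` of a vertex `b` are joined by a walk of length at most `k` that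
avoids `b` and stays close to it. Such walks lead around the tagged particle. -/
def HasDetours (k : ℕ) : Prop :=
  ∀ ⦃b a c : V⦄, G.Adj b a → G.Adj b c → ∃ W : G.Walk a c, b ∉ W.support ∧ W.length ≤ k ∧
    ∀ d ∈ W.darts, G.Adj b d.fst ∨ G.Adj b d.snd

lemma sum_getVert_le_sum_support [DecidableEq V] {u w : V} {W : G.Walk u w} (hW : W.IsPath)
    {g : V → ℝ} (hg : ∀ v, 0 ≤ g v) {n : ℕ} (hn : n ≤ W.length + 1) :
    ∑ s ∈ range n, g (W.getVert s) ≤ ∑ v ∈ W.support.toFinset, g v := by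
  have injOn : Set.InjOn W.getVert (range n) :=
    hW.getVert_injOn.mono fun s hs => Nat.lt_succ_iff.1 ((mem_range.1 hs).trans_le hn)
  rw [← sum_image injOn]
  exact sum_le_sum_of_subset_of_nonneg
    (image_subset_iff.2 fun s _ => List.mem_toFinset.2 (W.getVert_mem_support s))
    fun v _ _ => hg v

variable [Fintype V] [DecidableEq V] {N : ℕ} {F : TaggedConfig V N → ℝ}

lemma bulkCost_le_of_walk {x u w : V} (W : G.Walk u w) (hx : x ∉ W.support) {c : ℝ}
    (hc : ∀ d ∈ W.darts, bulkCost F x d.fst d.snd ≤ c) :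
    bulkCost F x u w ≤ 2 * W.length * c := by
  induction W with
  | nil => simp [bulkCost_self]
  | @cons u v w huv W ih =>
    rw [SimpleGraph.Walk.support_cons, List.mem_cons, not_or] at hx
    have hv : v ≠ x := fun h => hx.2 (h ▸ W.start_mem_support)
    have first : bulkCost F x u v ≤ c := hc ⟨(u, v), huv⟩ (by simp)
    have rest := ih hx.2 fun d hd => hc d (by simp [hd])
    have trans := bulkCost_trans (F := F) w u hv
    rw [bulkCost_comm x w u, bulkCost_comm x w v, bulkCost_comm x v u] at trans
    rw [SimpleGraph.Walk.length_cons]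
    push_cast
    linarith

variable [DecidableRel G.Adj]

lemma bulkCost_le_sqrt_localEnergy (x : V) {v a z : V} (haz : G.Adj a z)
    (hv : G.Adj v a ∨ G.Adj v z) :
    bulkCost F x a z ≤ √(localEnergy G (edgeEnergyAt F x) v) :=
  (bulkCost_le_sqrt_edgeEnergyAt x a z).trans <| Real.sqrt_le_sqrt <|
    le_localEnergy (edgeEnergyAt_nonneg F x) (edgeEnergyAt_comm F x) haz hv

lemma bulkCost_le_of_hasDetours {k : ℕ} (hG : HasDetours G k) {b a c : V} (ha : G.Adj b a)
    (hc : G.Adj b c) :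
    bulkCost F b a c ≤ 2 * k * √(localEnergy G (edgeEnergyAt F b) b) := by
  obtain ⟨W, hb, hk, hW⟩ := hG ha hc
  refine (bulkCost_le_of_walk W hb fun d hd =>
    bulkCost_le_sqrt_localEnergy b d.adj (hW d hd)).trans ?_
  gcongr

/-- The slack of letting the walk start next to `a` makes the induction pass through `x`. -/
lemma bulkCost_le_sum_support {k : ℕ} (hG : HasDetours G k) (x : V) {u w : V} (W : G.Walk u w)
    {a : V} (ha : a = u ∨ G.Adj a u) :
    bulkCost F x a w ≤
      (4 * k + 2) * (W.support.map fun v => √(localEnergy G (edgeEnergyAt F x) v)).sum := by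
  set g := fun v => √(localEnergy G (edgeEnergyAt F x) v) with hg
  have hg_nonneg : ∀ v, 0 ≤ g v := fun v => Real.sqrt_nonneg _
  have step : ∀ {a u : V}, (a = u ∨ G.Adj a u) → bulkCost F x u a ≤ g u := by
    rintro a u (rfl | hau)
    · rw [bulkCost_self]
      exact hg_nonneg a
    · exact bulkCost_le_sqrt_localEnergy x hau.symm (Or.inr hau.symm)
  induction W generalizing a with
  | @nil u =>
    simp only [SimpleGraph.Walk.support_nil, List.map_cons, List.map_nil, List.sum_singleton]
    have := step ha
    rw [bulkCost_comm] at this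
    nlinarith [hg_nonneg u, k.cast_nonneg (α := ℝ)]
  | @cons u v w huv W ih =>
    rw [SimpleGraph.Walk.support_cons, List.map_cons, List.sum_cons, mul_add]
    have hsum : 0 ≤ (W.support.map g).sum := List.sum_nonneg (by simp [hg])
    by_cases hax : a = x
    · rw [bulkCost, if_pos (Or.inl hax)]
      have := hg_nonneg u
      positivity
    obtain ⟨b, hbx, hb, hba⟩ : ∃ b ≠ x, (b = v ∨ G.Adj b v) ∧
        bulkCost F x b a ≤ (2 * k + 1) * g u := by
      by_cases hux : u = x
      · subst hux
        refine ⟨v, huv.ne', Or.inl rfl, ?_⟩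
        exact (bulkCost_le_of_hasDetours hG huv (ha.resolve_left hax).symm).trans
          (by nlinarith [hg_nonneg u])
      · exact ⟨u, hux, Or.inr huv, (step ha).trans (by nlinarith [hg_nonneg u])⟩
    have trans := bulkCost_trans (F := F) w a hbx
    rw [bulkCost_comm x w a, bulkCost_comm x w b] at trans
    linarith [ih hb]

lemma sqrt_localEnergy_edgeEnergyAt_le (x v : V) :
    √(localEnergy G (edgeEnergyAt F x) v) ≤ √(localEnergy G (edgeEnergy F) v) :=
  Real.sqrt_le_sqrt (localEnergy_mono (edgeEnergyAt_le_edgeEnergy F x) v)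

lemma tagCost_le_sqrt_localEnergy {a z : V} (haz : G.Adj a z) :
    tagCost F a z ≤ √(localEnergy G (edgeEnergy F) a) :=
  (tagCost_le_sqrt_edgeEnergy a z).trans <| Real.sqrt_le_sqrt <|
    le_localEnergy (edgeEnergy_nonneg F) (edgeEnergy_comm F) haz (Or.inr haz)

lemma bulkCost_corner_le {k : ℕ} (hG : HasDetours G k) (x y : V) {a b c : V} (hab : G.Adj a b)
    (hbc : G.Adj b c) :
    bulkCost F x b c + bulkCost F b a c + bulkCost F y a b ≤
      (2 * k + 1) * √(localEnergy G (edgeEnergy F) b) + √(localEnergy G (edgeEnergy F) a) := by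
  have ahead := (bulkCost_le_sqrt_localEnergy (F := F) x hbc (Or.inr hbc)).trans
    (sqrt_localEnergy_edgeEnergyAt_le x b)
  have around := (bulkCost_le_of_hasDetours (F := F) hG hab.symm hbc).trans
    (mul_le_mul_of_nonneg_left (sqrt_localEnergy_edgeEnergyAt_le b b) (by positivity))
  have behind := (bulkCost_le_sqrt_localEnergy (F := F) y hab (Or.inr hab)).trans
    (sqrt_localEnergy_edgeEnergyAt_le y a)
  linarith

lemma tagCost_le_sum_support {k : ℕ} (hG : HasDetours G k) {u w : V} {W : G.Walk u w}
    (hW : W.IsPath) :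
    tagCost F u w ≤
      (2 * k + 3) * ∑ v ∈ W.support.toFinset, √(localEnergy G (edgeEnergy F) v) := by
  set g := fun v => √(localEnergy G (edgeEnergy F) v)
  have hg_nonneg : ∀ v, 0 ≤ g v := fun v => Real.sqrt_nonneg _
  obtain hlen | ⟨t, hlen⟩ : W.length = 0 ∨ ∃ t, W.length = t + 1 := by
    cases W.length <;> simp
  · obtain rfl := SimpleGraph.Walk.eq_of_length_eq_zero hlen
    rw [tagCost, incr_swap_self]
    exact mul_nonneg (by positivity) (sum_nonneg fun v _ => hg_nonneg v)
  have adj : ∀ s ≤ t, G.Adj (W.getVert s) (W.getVert (s + 1)) := fun s hs =>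
    W.adj_getVert_succ (by omega)
  have transport := tagCost_le_of_injOn (F := F) (p := W.getVert) (t := t)
    (by rw [← hlen]; exact hW.getVert_injOn)
  rw [← hlen, W.getVert_zero, W.getVert_length, hlen] at transport
  have moves : ∀ s ∈ range (t + 1),
      tagCost F (W.getVert s) (W.getVert (s + 1)) ≤ g (W.getVert s) := fun s hs =>
    tagCost_le_sqrt_localEnergy (adj s (by simpa [Nat.lt_succ_iff] using hs))
  have repairs : ∀ s ∈ range t,
      bulkCost F u (W.getVert (s + 1)) (W.getVert (s + 2)) +
        bulkCost F (W.getVert (s + 1)) (W.getVert s) (W.getVert (s + 2)) +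
        bulkCost F w (W.getVert s) (W.getVert (s + 1)) ≤
      (2 * k + 1) * g (W.getVert (s + 1)) + g (W.getVert s) := fun s hs =>
    bulkCost_corner_le hG u w (adj s (mem_range.1 hs).le) (adj (s + 1) (mem_range.1 hs))
  have all := sum_getVert_le_sum_support hW hg_nonneg (n := t + 1) (by omega)
  have init := sum_getVert_le_sum_support hW hg_nonneg (n := t) (by omega)
  have tail : ∑ s ∈ range t, g (W.getVert (s + 1)) ≤ ∑ v ∈ W.support.toFinset, g v := by
    have shifted := all
    rw [sum_range_succ'] at shifted
    linarith [hg_nonneg (W.getVert 0)]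
  refine transport.trans ((add_le_add (sum_le_sum moves) (sum_le_sum repairs)).trans ?_)
  rw [sum_add_distrib, ← mul_sum]
  nlinarith [k.cast_nonneg (α := ℝ)]

lemma sum_totalEnergy_edgeEnergyAt :
    ∑ x, totalEnergy G (edgeEnergyAt F x) = totalEnergy G (edgeEnergy F) := by
  simp only [totalEnergy, ← sum_edgeEnergyAt]
  rw [sum_comm]
  exact sum_congr rfl fun a _ => sum_comm

section Gap

variable {Δ k m M : ℕ} (hΔ : ∀ v, G.degree v ≤ Δ) (hG : HasDetours G k)
  (hγ : HasCanonicalPaths G m M) (F)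
include hΔ hG hγ

lemma sum_bulkCost_sq_le :
    ∑ x, ∑ a, ∑ b, bulkCost F x a b ^ 2 ≤
      (4 * k + 2) ^ 2 * m * M * Δ * totalEnergy G (edgeEnergy F) := by
  obtain ⟨γ, hm, hM⟩ := hγ
  have bulk_le : ∀ x u w, bulkCost F x u w ≤ (4 * k + 2) *
      ∑ v ∈ (γ u w).1.support.toFinset, √(localEnergy G (edgeEnergyAt F x) v) := fun x u w => by
    rw [List.sum_toFinset _ (γ u w).2.support_nodup]
    exact bulkCost_le_sum_support hG x _ (Or.inl rfl)
  calc ∑ x, ∑ a, ∑ b, bulkCost F x a b ^ 2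
      ≤ ∑ x, (4 * k + 2 : ℝ) ^ 2 * m * M * ∑ v, localEnergy G (edgeEnergyAt F x) v :=
        sum_le_sum fun x _ => sum_sq_le_of_le_sum_sqrt hm (by simpa using hM)
          (localEnergy_nonneg (edgeEnergyAt_nonneg F x)) (bulkCost_nonneg x) (bulk_le x)
    _ ≤ ∑ x, (4 * k + 2 : ℝ) ^ 2 * m * M * (Δ * totalEnergy G (edgeEnergyAt F x)) := by
        gcongr with x
        exact sum_localEnergy_le hΔ (edgeEnergyAt_nonneg F x)
    _ = (4 * k + 2) ^ 2 * m * M * Δ * totalEnergy G (edgeEnergy F) := by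
        simp only [← mul_sum, sum_totalEnergy_edgeEnergyAt, mul_assoc]

lemma sum_tagCost_sq_le :
    ∑ a, ∑ b, tagCost F a b ^ 2 ≤
      (2 * k + 3) ^ 2 * m * M * Δ * totalEnergy G (edgeEnergy F) := by
  obtain ⟨γ, hm, hM⟩ := hγ
  refine (sum_sq_le_of_le_sum_sqrt hm (by simpa using hM)
    (localEnergy_nonneg (edgeEnergy_nonneg F)) tagCost_nonneg
    fun u w => tagCost_le_sum_support hG (γ u w).2).trans ?_
  rw [mul_assoc _ (Δ : ℝ)]
  gcongr
  exact sum_localEnergy_le hΔ (edgeEnergy_nonneg F)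

theorem card_holes_mul_sum_sq_sub_expect_le :
    ((Fintype.card V - N : ℕ) : ℝ) * ∑ ω, (F ω - 𝔼 ω', F ω') ^ 2 ≤
      19 * (4 * k + 3) ^ 2 * m * M * Δ * totalEnergy G (edgeEnergy F) := by
  set K : ℝ := ((Fintype.card V - N : ℕ) : ℝ)
  set n : ℝ := (Fintype.card V : ℝ)
  set E := totalEnergy G (edgeEnergy F)
  set B := (4 * k + 3 : ℝ) ^ 2 * m * M * Δ * E with hB
  have hE : 0 ≤ E := totalEnergy_nonneg (edgeEnergy_nonneg F)
  have hKn : K ≤ n := Nat.cast_le.2 (Nat.sub_le ..)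
  have : 0 ≤ K := Nat.cast_nonneg _
  have bulk_le : ∑ x, ∑ a, ∑ b, bulkCost F x a b ^ 2 ≤ B :=
    (sum_bulkCost_sq_le F hΔ hG hγ).trans (by rw [hB]; gcongr; norm_num)
  have tag_le : ∑ a, ∑ b, tagCost F a b ^ 2 ≤ B :=
    (sum_tagCost_sq_le F hΔ hG hγ).trans (by rw [hB]; gcongr; norm_num)
  rcases Nat.eq_zero_or_pos (Fintype.card V - N) with hK₀ | hK₀
  · have : K = 0 := by simp [K, hK₀]
    rw [this, zero_mul]
    positivity
  have hK₁ : 1 ≤ K := Nat.one_le_cast.2 hK₀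
  have hn : 0 < n := by linarith
  refine le_of_mul_le_mul_left ?_ hn
  calc n * (K * ∑ ω, (F ω - 𝔼 ω', F ω') ^ 2)
      = K * (n * ∑ ω, (F ω - 𝔼 ω', F ω') ^ 2) := by ring
    _ ≤ K * ∑ u, ∑ w, exchangeForm F u w := by
        gcongr
        exact card_mul_sum_sq_sub_expect_le F
    _ ≤ (K + 12) * B + 6 * n * B := by
        refine card_holes_mul_sum_exchangeForm_le.trans ?_
        gcongr
    _ ≤ n * (19 * (4 * k + 3) ^ 2 * m * M * Δ * E) := by
        have : 0 ≤ B := by positivity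
        nlinarith

end Gap

end CanonicalPaths

section GraphPower

open Function

variable {ι α : Type*} [DecidableEq ι]

/-- The box product of copies of `H` indexed by `ι`: two points are adjacent when they differ in a
single coordinate, by an edge of `H`. When `H` is a path this is a grid. -/
def graphPower (ι : Type*) [DecidableEq ι] (H : SimpleGraph α) : SimpleGraph (ι → α) where
  Adj a b := ∃ i c, H.Adj (a i) c ∧ b = update a i c
  symm := ⟨by
    rintro a _ ⟨i, c, h, rfl⟩
    exact ⟨i, a i, by simpa using h.symm, by simp⟩⟩
  loopless := ⟨by
    rintro a ⟨i, c, h, ha⟩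
    have := congrFun ha i
    rw [update_self] at this
    exact h.ne this⟩

variable {H : SimpleGraph α}

lemma graphPower_adj_update {a : ι → α} {i : ι} {c : α} (h : H.Adj (a i) c) :
    (graphPower ι H).Adj a (update a i c) := ⟨i, c, h, rfl⟩

lemma degree_graphPower_le [Fintype ι] [Fintype α] [DecidableRel H.Adj]
    [DecidableRel (graphPower ι H).Adj] {Δ : ℕ} (hΔ : ∀ x, H.degree x ≤ Δ) (v : ι → α) :
    (graphPower ι H).degree v ≤ Fintype.card ι * Δ := by
  classical
  calc (graphPower ι H).degree v
      ≤ #(univ.biUnion fun i => (H.neighborFinset (v i)).image (update v i)) := by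
        refine card_le_card fun b hb => ?_
        obtain ⟨i, c, h, rfl⟩ := ((graphPower ι H).mem_neighborFinset v b).1 hb
        simpa using ⟨i, c, h, rfl⟩
    _ ≤ Fintype.card ι * Δ :=
        card_biUnion_le_card_mul _ _ _ fun i _ => card_image_le.trans (hΔ (v i))

lemma exists_corner_detour {b : ι → α} {i j : ι} (hij : i ≠ j) {x y : α}
    (hx : H.Adj (b i) x) (hy : H.Adj (b j) y) :
    ∃ W : (graphPower ι H).Walk (update b i x) (update b j y), b ∉ W.support ∧ W.length = 2 ∧
      ∀ d ∈ W.darts, (graphPower ι H).Adj b d.fst ∨ (graphPower ι H).Adj b d.snd := by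
  have ha := graphPower_adj_update hx
  have hc := graphPower_adj_update hy
  have has : (graphPower ι H).Adj (update b i x) (update (update b i x) j y) :=
    graphPower_adj_update (by rwa [update_of_ne hij.symm])
  have hsc : (graphPower ι H).Adj (update (update b i x) j y) (update b j y) := by
    rw [update_comm hij]
    exact (graphPower_adj_update (by rwa [update_of_ne hij])).symm
  have hs : b ≠ update (update b i x) j y := fun h => hy.ne (by simpa using congrFun h j)
  refine ⟨.cons has (.cons hsc .nil), ?_, rfl, ?_⟩
  · simp [ha.ne, hc.ne, hs]
  · simp [ha, hc]

lemma hasDetours_graphPower [Nontrivial ι] (hH : ∀ x, ∃ y, H.Adj x y) :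
    HasDetours (graphPower ι H) 4 := by
  rintro b _ _ ⟨i, x, hx, rfl⟩ ⟨j, y, hy, rfl⟩
  by_cases hij : i = j
  · subst hij
    obtain ⟨k, hk⟩ := exists_ne i
    obtain ⟨z, hz⟩ := hH (b k)
    obtain ⟨W₁, hb₁, hl₁, hd₁⟩ := exists_corner_detour hk.symm hx hz
    obtain ⟨W₂, hb₂, hl₂, hd₂⟩ := exists_corner_detour hk hz hy
    refine ⟨W₁.append W₂, ?_, by simp [hl₁, hl₂], fun d hd => ?_⟩
    · rw [SimpleGraph.Walk.mem_support_append_iff]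
      exact not_or.2 ⟨hb₁, hb₂⟩
    · rw [SimpleGraph.Walk.darts_append, List.mem_append] at hd
      exact hd.elim (hd₁ d) (hd₂ d)
  · obtain ⟨W, hb, hl, hd⟩ := exists_corner_detour hij hx hy
    exact ⟨W, hb, by omega, hd⟩

lemma exists_line_walk (hH : H.Preconnected) (v : ι → α) (i : ι) (c : α) :
    ∃ W : (graphPower ι H).Walk v (update v i c), ∀ z ∈ W.support, ∃ x, z = update v i x := by
  let line : H →g graphPower ι H :=
    ⟨update v i, fun {x y} h => ⟨i, y, by simpa using h, by simp⟩⟩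
  obtain ⟨W⟩ := hH (v i) c
  suffices ∃ W : (graphPower ι H).Walk (update v i (v i)) (update v i c),
      ∀ z ∈ W.support, ∃ x, z = update v i x by rwa [update_eq_self] at this
  refine ⟨W.map line, fun z hz => ?_⟩
  rw [SimpleGraph.Walk.support_map, List.mem_map] at hz
  obtain ⟨x, -, rfl⟩ := hz
  exact ⟨x, rfl⟩

end GraphPower

section Routes

open Function

variable {d : ℕ} {α : Type*}

/-- The point reached from `u` after replacing its first `k` coordinates by those of `w`. -/
def route (u w : Fin d → α) (k : ℕ) : Fin d → α :=
  fun j => if (j : ℕ) < k then w j else u j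

lemma route_zero (u w : Fin d → α) : route u w 0 = u :=
  funext fun j => by simp [route]

lemma route_last (u w : Fin d → α) : route u w d = w :=
  funext fun j => by simp [route]

lemma route_succ (u w : Fin d → α) (k : Fin d) :
    route u w (k + 1) = update (route u w k) k (w k) := by
  funext j
  rcases eq_or_ne j k with rfl | hj
  · simp [route]
  · have : (j : ℕ) < k + 1 ↔ (j : ℕ) < k := by
      have := Fin.val_ne_of_ne hj
      omega
    simp only [route, this, update_of_ne hj]

variable {H : SimpleGraph α}

lemma exists_route_walk [NeZero d] (hH : H.Preconnected) (u w : Fin d → α) :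
    ∃ W : (graphPower (Fin d) H).Walk u w,
      ∀ z ∈ W.support, ∃ (k : Fin d) (x : α), z = update (route u w k) k x := by
  suffices ∀ n ≤ d, ∃ W : (graphPower (Fin d) H).Walk u (route u w n),
      ∀ z ∈ W.support, ∃ (k : Fin d) (x : α), z = update (route u w k) k x by
    have full := this d le_rfl
    rwa [route_last] at full
  intro n hn
  induction n with
  | zero =>
    rw [route_zero]
    exact ⟨.nil, fun z hz => ⟨0, u 0, by simpa [route_zero] using hz⟩⟩
  | succ n ih =>
    obtain ⟨W, hW⟩ := ih (by omega)
    have line := exists_line_walk hH (route u w n) ⟨n, hn⟩ (w ⟨n, hn⟩)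
    rw [← route_succ u w ⟨n, hn⟩] at line
    obtain ⟨L, hL⟩ := line
    refine ⟨W.append L, fun z hz => ?_⟩
    rw [SimpleGraph.Walk.mem_support_append_iff] at hz
    exact hz.elim (hW z) fun hz => ⟨⟨n, hn⟩, hL z hz⟩

variable [Fintype α] [DecidableEq α]

lemma card_filter_eq_update_route_le (v : Fin d → α) (k : Fin d) :
    #{q : (Fin d → α) × (Fin d → α) | ∃ x, v = update (route q.1 q.2 k) k x} ≤
      Fintype.card α * Fintype.card (Fin d → α) := by
  rw [← Fintype.card_prod, ← card_univ]
  refine card_le_card_of_injOn (fun q => (q.1 k, route q.2 q.1 k)) (fun _ _ => mem_univ _) ?_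
  rintro ⟨u, w⟩ hq ⟨u', w'⟩ hq' h
  obtain ⟨x, hx⟩ := (mem_filter.1 hq).2
  obtain ⟨x', hx'⟩ := (mem_filter.1 hq').2
  have forward : ∀ j ≠ k, route u w k j = route u' w' k j := fun j hj => by
    simpa [hj] using congrFun (hx.symm.trans hx') j
  have pivot : u k = u' k := (Prod.ext_iff.1 h).1
  have backward : ∀ j, route w u k j = route w' u' k j := congrFun (Prod.ext_iff.1 h).2
  have coords : ∀ j, u j = u' j ∧ w j = w' j := fun j => by
    rcases eq_or_ne j k with rfl | hj
    · exact ⟨pivot, by simpa [route] using backward j⟩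
    · have hf := forward j hj
      have hb := backward j
      unfold route at hf hb
      split_ifs at hf hb
      exacts [⟨hb, hf⟩, ⟨hf, hb⟩]
  exact Prod.ext (funext fun j => (coords j).1) (funext fun j => (coords j).2)

lemma hasCanonicalPaths_graphPower [NeZero d] (hH : H.Preconnected) :
    HasCanonicalPaths (graphPower (Fin d) H) (d * Fintype.card α)
      (d * (Fintype.card α * Fintype.card (Fin d → α))) := by
  choose W hW using exists_route_walk (d := d) hH
  have hpath : ∀ u w, ∀ z ∈ (W u w).bypass.support,
      ∃ (k : Fin d) (x : α), z = update (route u w k) k x := fun u w z hz =>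
    hW u w z ((W u w).support_bypass_subset_support hz)
  refine ⟨fun u w => (W u w).toPath, fun u w => ?_, fun v => ?_⟩
  · calc _ ≤ #(univ.image fun kx : Fin d × α => update (route u w kx.1) kx.1 kx.2) := by
          refine card_le_card fun z hz => ?_
          obtain ⟨k, x, rfl⟩ := hpath u w z (List.mem_toFinset.1 hz)
          exact mem_image_of_mem _ (mem_univ (k, x))
      _ ≤ d * Fintype.card α := card_image_le.trans_eq (by simp)
  · calc _ ≤ #(univ.biUnion fun k : Fin d => {q : (Fin d → α) × (Fin d → α) |
            ∃ x, v = update (route q.1 q.2 k) k x}) := by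
          refine card_le_card fun q hq => ?_
          simpa using hpath q.1 q.2 v (mem_filter.1 hq).2
      _ ≤ Fintype.card (Fin d) * (Fintype.card α * Fintype.card (Fin d → α)) :=
          card_biUnion_le_card_mul _ _ _ fun k _ => card_filter_eq_update_route_le v k
      _ = _ := by rw [Fintype.card_fin]

theorem card_holes_mul_sum_sq_sub_expect_le_graphPower [Nontrivial α] (hd : 2 ≤ d)
    (hH : H.Preconnected) [DecidableRel H.Adj] [DecidableRel (graphPower (Fin d) H).Adj] {Δ : ℕ}
    (hΔ : ∀ x, H.degree x ≤ Δ) {N : ℕ} (F : TaggedConfig (Fin d → α) N → ℝ) :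
    ((Fintype.card (Fin d → α) - N : ℕ) : ℝ) * ∑ ω, (F ω - 𝔼 ω', F ω') ^ 2 ≤
      (19 * d) ^ 3 * Δ * Fintype.card α ^ 2 * Fintype.card (Fin d → α) *
        totalEnergy (graphPower (Fin d) H) (edgeEnergy F) := by
  have : NeZero d := ⟨by omega⟩
  have : Nontrivial (Fin d) := Fin.nontrivial_iff_two_le.2 hd
  refine (card_holes_mul_sum_sq_sub_expect_le F (degree_graphPower_le hΔ)
    (hasDetours_graphPower hH.exists_adj_of_nontrivial)
    (hasCanonicalPaths_graphPower hH)).trans_eq ?_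
  rw [Fintype.card_fin]
  push_cast
  ring

end Routes

section Box

variable {d ℓ : ℕ}

/-- The sites of the box `B_ℓ` as the points of a grid, with coordinates shifted by `ℓ`. -/
def gridEquiv (d ℓ : ℕ) : (Fin d → Fin (2 * ℓ + 1)) ≃ Site d ℓ where
  toFun v := ⟨fun j => (v j : ℤ) - ℓ, Finset.mem_Icc.2
    ⟨fun j => by have := (v j).isLt; dsimp only; omega,
      fun j => by have := (v j).isLt; dsimp only; omega⟩⟩
  invFun s j := ⟨(s.1 j + ℓ).toNat, by
    obtain ⟨lower, upper⟩ := Finset.mem_Icc.1 s.2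
    have := lower j
    have := upper j
    dsimp only at *
    omega⟩
  left_inv v := funext fun j => Fin.ext (by simp)
  right_inv s := Subtype.ext <| funext fun j => by
    have := (Finset.mem_Icc.1 s.2).1 j
    dsimp only at this ⊢
    omega

lemma card_box : (Box d ℓ).card = Fintype.card (Fin d → Fin (2 * ℓ + 1)) := by
  rw [Fintype.card_congr (gridEquiv d ℓ), Fintype.card_coe]

lemma siteAdj_gridEquiv {v w : Fin d → Fin (2 * ℓ + 1)}
    (h : (graphPower (Fin d) (SimpleGraph.pathGraph (2 * ℓ + 1))).Adj v w) :
    SiteAdj (gridEquiv d ℓ v) (gridEquiv d ℓ w) := by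
  obtain ⟨i, c, hc, rfl⟩ := h
  simp only [SiteAdj, gridEquiv, coe_fn_mk]
  rw [sum_eq_single_of_mem i (mem_univ i) fun j _ hj => by simp [hj], Function.update_self]
  rcases SimpleGraph.pathGraph_adj.1 hc with hc | hc <;> rw [← hc] <;> push_cast <;> ring

lemma degree_pathGraph_le {n : ℕ} [DecidableRel (SimpleGraph.pathGraph n).Adj] (x : Fin n) :
    (SimpleGraph.pathGraph n).degree x ≤ 2 := by
  refine (card_le_card_of_injOn (t := {(x : ℕ) + 1, (x : ℕ) - 1}) Fin.val (fun y hy => ?_)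
    Fin.val_injective.injOn).trans card_le_two
  have := SimpleGraph.pathGraph_adj.1 ((SimpleGraph.mem_neighborFinset _ x y).1 hy)
  simp only [coe_insert, coe_singleton, Set.mem_insert_iff, Set.mem_singleton_iff]
  omega

/-- The grid configurations with as many particles as the states of `taggedSlice d ℓ ρ`. -/
abbrev SliceConfig (d ℓ : ℕ) (ρ : ℝ) :=
  TaggedConfig (Fin d → Fin (2 * ℓ + 1)) ⌊ρ * (Box d ℓ).card⌋₊

/-- The state of the exclusion process in `B_ℓ` given by a configuration on the grid. -/
def toState {N : ℕ} (ω : TaggedConfig (Fin d → Fin (2 * ℓ + 1)) N) : TState d ℓ :=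
  (gridEquiv d ℓ ω.tag, ω.occ ∘ (gridEquiv d ℓ).symm)

lemma apply_toState_swap_smul {N : ℕ} (f : TState d ℓ → ℝ) (v z : Fin d → Fin (2 * ℓ + 1))
    (ω : TaggedConfig (Fin d → Fin (2 * ℓ + 1)) N) :
    f (toState (swap v z • ω)) = edgeMap (gridEquiv d ℓ v) (gridEquiv d ℓ z) f (toState ω) := by
  refine congrArg f (Prod.ext ((gridEquiv d ℓ).injective.map_swap _ _ _) (funext fun s => ?_))
  obtain ⟨u, rfl⟩ := (gridEquiv d ℓ).surjective s
  simp [toState, TaggedConfig.occ_smul, ← (gridEquiv d ℓ).injective.map_swap]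

lemma numParticles_comp_symm (η : (Fin d → Fin (2 * ℓ + 1)) → Bool) :
    numParticles (η ∘ (gridEquiv d ℓ).symm) = #{v | η v = true} :=
  card_equiv (gridEquiv d ℓ).symm fun v => by simp

lemma mem_taggedSlice {ρ : ℝ} (hρ : 0 ≤ ρ) {ω : TState d ℓ} :
    ω ∈ taggedSlice d ℓ ρ ↔ ω.2 ω.1 = true ∧ numParticles ω.2 = ⌊ρ * (Box d ℓ).card⌋₊ := by
  rw [taggedSlice, mem_filter_univ, ← Int.natCast_floor_eq_floor (by positivity), Nat.cast_inj]

lemma sum_taggedSlice {ρ : ℝ} (hρ : 0 ≤ ρ) (g : TState d ℓ → ℝ) :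
    ∑ ω ∈ taggedSlice d ℓ ρ, g ω = ∑ ω : SliceConfig d ℓ ρ, g (toState ω) := by
  refine (sum_nbij toState (fun ω _ => (mem_taggedSlice hρ).2 ⟨?_, ?_⟩) (fun ω _ ω' _ h => ?_)
    (fun ω hω => ?_) fun _ _ => rfl).symm
  · simp [toState, ω.occ_tag]
  · rw [toState, numParticles_comp_symm, ω.card_occ]
  · obtain ⟨tag_eq, occ_eq⟩ := Prod.ext_iff.1 h
    exact TaggedConfig.ext ((gridEquiv d ℓ).injective tag_eq)
      ((gridEquiv d ℓ).symm.surjective.injective_comp_right occ_eq)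
  · obtain ⟨occ_tag, card_occ⟩ := (mem_taggedSlice hρ).1 hω
    refine ⟨⟨(gridEquiv d ℓ).symm ω.1, ω.2 ∘ gridEquiv d ℓ, by simpa using occ_tag, ?_⟩,
      mem_univ _, ?_⟩
    · rw [← card_occ, ← numParticles_comp_symm]
      simp [Function.comp_assoc]
    · simp [toState, Function.comp_assoc]

lemma taggedExp_eq_expect {ρ : ℝ} (hρ : 0 ≤ ρ) (g : TState d ℓ → ℝ) :
    taggedExp d ℓ ρ g = 𝔼 ω : SliceConfig d ℓ ρ, g (toState ω) := by
  have card_eq : ((taggedSlice d ℓ ρ).card : ℝ) = Fintype.card (SliceConfig d ℓ ρ) := by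
    simpa using sum_taggedSlice hρ fun _ => 1
  rw [taggedExp, sum_taggedSlice hρ, card_eq, Fintype.expect_eq_sum_div_card]

lemma edgeEnergy_comp_toState {ρ : ℝ} (hρ : 0 ≤ ρ) (f : TState d ℓ → ℝ)
    (v z : Fin d → Fin (2 * ℓ + 1)) :
    edgeEnergy (fun ω : SliceConfig d ℓ ρ => f (toState ω)) v z =
      ∑ ω ∈ taggedSlice d ℓ ρ, rate (gridEquiv d ℓ v) (gridEquiv d ℓ z) ω.2 *
        (edgeMap (gridEquiv d ℓ v) (gridEquiv d ℓ z) f ω - f ω) ^ 2 := by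
  rw [sum_taggedSlice hρ]
  refine sum_congr rfl fun ω _ => ?_
  simp only [apply_toState_swap_smul, rate, ite_mul, one_mul, zero_mul]
  simp [toState]

open scoped Classical in
lemma totalEnergy_comp_toState_le {ρ : ℝ} (hρ : 0 ≤ ρ) (f : TState d ℓ → ℝ) :
    totalEnergy (graphPower (Fin d) (SimpleGraph.pathGraph (2 * ℓ + 1)))
        (edgeEnergy fun ω : SliceConfig d ℓ ρ => f (toState ω)) ≤
      ∑ y : Site d ℓ, ∑ z : Site d ℓ, if SiteAdj y z then
        ∑ ω ∈ taggedSlice d ℓ ρ, rate y z ω.2 * (edgeMap y z f ω - f ω) ^ 2 else 0 := by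
  simp only [← (gridEquiv d ℓ).sum_comp, ← edgeEnergy_comp_toState hρ, ← sum_filter]
  refine sum_le_sum fun v _ => sum_le_sum_of_subset_of_nonneg (fun z hz => ?_)
    fun z _ _ => edgeEnergy_nonneg _ v z
  exact mem_filter.2 ⟨mem_univ z, siteAdj_gridEquiv ((SimpleGraph.mem_neighborFinset _ v z).1 hz)⟩

lemma one_sub_mul_card_box_le {ρ : ℝ} (hρ : 0 ≤ ρ) :
    (1 - ρ) * (Box d ℓ).card ≤ (((Box d ℓ).card - ⌊ρ * (Box d ℓ).card⌋₊ : ℕ) : ℝ) := by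
  have floor_le : (⌊ρ * (Box d ℓ).card⌋₊ : ℝ) ≤ ρ * (Box d ℓ).card :=
    Nat.floor_le (by positivity)
  have sub_le : ((Box d ℓ).card : ℝ) - ⌊ρ * (Box d ℓ).card⌋₊ ≤
      (((Box d ℓ).card - ⌊ρ * (Box d ℓ).card⌋₊ : ℕ) : ℝ) := by
    rw [tsub_le_iff_right]
    exact_mod_cast le_tsub_add
  linarith

lemma one_sub_mul_sum_sq_sub_taggedExp_le (hd : 2 ≤ d) {ρ : ℝ} (hρ : 0 ≤ ρ) (hℓ : 1 ≤ ℓ)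
    (f : TState d ℓ → ℝ) :
    (1 - ρ) * ∑ ω ∈ taggedSlice d ℓ ρ, (f ω - taggedExp d ℓ ρ f) ^ 2 ≤
      18 * (19 * d) ^ 3 * ℓ ^ 2 * ∑ y : Site d ℓ, ∑ z : Site d ℓ, if SiteAdj y z then
        ∑ ω ∈ taggedSlice d ℓ ρ, rate y z ω.2 * (edgeMap y z f ω - f ω) ^ 2 else 0 := by
  classical
  have energy_le := totalEnergy_comp_toState_le hρ f
  set F : SliceConfig d ℓ ρ → ℝ := fun ω => f (toState ω)
  set dirichletSum := ∑ y : Site d ℓ, ∑ z : Site d ℓ, if SiteAdj y z then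
    ∑ ω ∈ taggedSlice d ℓ ρ, rate y z ω.2 * (edgeMap y z f ω - f ω) ^ 2 else 0
  have card_box_pos : 0 < ((Box d ℓ).card : ℝ) := by
    rw [Nat.cast_pos, card_box]
    exact Fintype.card_pos
  have : Nontrivial (Fin (2 * ℓ + 1)) := Fin.nontrivial_iff_two_le.2 (by omega)
  have gap := card_holes_mul_sum_sq_sub_expect_le_graphPower hd
    (SimpleGraph.pathGraph_preconnected (2 * ℓ + 1)) degree_pathGraph_le F
  rw [← card_box, Fintype.card_fin] at gap
  have side_le : ((2 * ℓ + 1 : ℕ) : ℝ) ≤ 3 * ℓ := by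
    exact_mod_cast (by omega : 2 * ℓ + 1 ≤ 3 * ℓ)
  rw [sum_taggedSlice hρ, taggedExp_eq_expect hρ]
  refine le_of_mul_le_mul_left ?_ card_box_pos
  calc (Box d ℓ).card * ((1 - ρ) * ∑ ω, (F ω - 𝔼 ω', F ω') ^ 2)
      = (1 - ρ) * (Box d ℓ).card * ∑ ω, (F ω - 𝔼 ω', F ω') ^ 2 := by ring
    _ ≤ ((Box d ℓ).card - ⌊ρ * (Box d ℓ).card⌋₊ : ℕ) * ∑ ω, (F ω - 𝔼 ω', F ω') ^ 2 := by
        gcongr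
        exact one_sub_mul_card_box_le hρ
    _ ≤ _ := gap
    _ ≤ (19 * d) ^ 3 * (2 : ℕ) * (3 * ℓ) ^ 2 * (Box d ℓ).card * dirichletSum := by
        gcongr
        exact totalEnergy_nonneg (edgeEnergy_nonneg F)
    _ = (Box d ℓ).card * (18 * (19 * d) ^ 3 * ℓ ^ 2 * dirichletSum) := by push_cast; ring

end Box

end TaggedExclusion

/-- **Spectral gap for the tagged-particle exclusion process in finite volume.**
Fix `d ≥ 2`.  For every `ρ ∈ (0,1)` there exists a constant `C_S(d,ρ) < ∞`, which may be
chosen nondecreasing in `ρ`, such that for every `ℓ ≥ 1` and every `f : Ω_ℓ → ℝ`,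
`⟨(f − ⟨f⟩_{ℓ,ρ})²⟩_{ℓ,ρ} ≤ C_S ℓ² Σ_{e ∈ 𝔹_ℓ} ⟨a_e (f^e − f)²⟩_{ℓ,ρ}`.
The sum over unordered nearest-neighbour edges `e = {y,z} ⊆ B_ℓ` is written as half the
sum over ordered pairs of adjacent sites. -/
theorem tagged_particle_spectral_gap (d : ℕ) (hd : 2 ≤ d) :
    ∃ C : ℝ → ℝ,
      (∀ ρ₁ ∈ Set.Ioo (0 : ℝ) 1, ∀ ρ₂ ∈ Set.Ioo (0 : ℝ) 1, ρ₁ ≤ ρ₂ → C ρ₁ ≤ C ρ₂) ∧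
      ∀ ρ ∈ Set.Ioo (0 : ℝ) 1, ∀ ℓ : ℕ, 1 ≤ ℓ → ∀ f : TState d ℓ → ℝ,
        taggedExp d ℓ ρ (fun ω => (f ω - taggedExp d ℓ ρ f) ^ 2) ≤
          C ρ * (ℓ : ℝ) ^ 2 *
            ((1 : ℝ) / 2 * ∑ y : Site d ℓ, ∑ z : Site d ℓ,
              if SiteAdj y z then
                taggedExp d ℓ ρ (fun ω => rate y z ω.2 * (edgeMap y z f ω - f ω) ^ 2)
              else 0) := by
  refine ⟨fun ρ => 36 * (19 * d) ^ 3 / (1 - ρ), fun ρ₁ _ ρ₂ h₂ h => ?_, fun ρ hρ ℓ hℓ f => ?_⟩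
  · have : 0 < 1 - ρ₂ := sub_pos.2 h₂.2
    dsimp only
    gcongr
  · have gap := TaggedExclusion.one_sub_mul_sum_sq_sub_taggedExp_le hd hρ.1.le hℓ f
    rw [← le_div_iff₀' (sub_pos.2 hρ.2)] at gap
    calc taggedExp d ℓ ρ (fun ω => (f ω - taggedExp d ℓ ρ f) ^ 2)
        ≤ _ := div_le_div_of_nonneg_right gap (Nat.cast_nonneg _)
      _ = 36 * (19 * d) ^ 3 / (1 - ρ) * ℓ ^ 2 * (1 / 2 * ((∑ y : Site d ℓ, ∑ z : Site d ℓ,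
            if SiteAdj y z then
              ∑ ω ∈ taggedSlice d ℓ ρ, rate y z ω.2 * (edgeMap y z f ω - f ω) ^ 2
            else 0) / (taggedSlice d ℓ ρ).card)) := by ring
      _ = _ := by simp only [taggedExp, Finset.sum_div, ite_div, zero_div]

end
end

section
/- Spectral gap for the Kawasaki dynamics with one site pinned: There exists a constant C_K(d) < ∞ such that for every ρ ∈ [0,1] with ⌊ρ|B_ℓ|⌋ ≥ 1, every integer ℓ ≥ 1, every site x ∈ B_ℓ and every function f : {0,1}^{B_ℓ} → ℝ, one has ⟨(f − ⟨f | η(x) = 1⟩_{ℓ,ρ})² | η(x) = 1⟩_{ℓ,ρ} ≤ C_K ℓ² Σ_{e ∈ 𝔹_ℓ, e ∌ x} ⟨(f(η^e) − f(η))² | η(x) = 1⟩_{ℓ,ρ}, where the Dirichlet sum on the right side runs only over edges e not containing x. -/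
open Finset

noncomputable section

open scoped Classical in
/-- The set of configurations with exactly `⌊ρ |B_ℓ|⌋` particles which, moreover, have a
particle at the site `x`. -/
def pinnedSlice (d ℓ : ℕ) (ρ : ℝ) (x : Site d ℓ) : Finset (Config d ℓ) :=
  Finset.univ.filter fun η =>
    (numParticles η : ℤ) = ⌊ρ * ((Box d ℓ).card : ℝ)⌋ ∧ η x = true

/-- Expectation with respect to the uniform probability measure `⟨· | η(x) = 1⟩_{ℓ,ρ}`,
i.e. the measure `⟨·⟩_{ℓ,ρ}` conditioned on the event that the site `x` is occupied. -/
def pinnedExp (d ℓ : ℕ) (ρ : ℝ) (x : Site d ℓ) (g : Config d ℓ → ℝ) : ℝ :=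
  (∑ η ∈ pinnedSlice d ℓ ρ x, g η) / ((pinnedSlice d ℓ ρ x).card : ℝ)

/-- The configuration `η^e` obtained from `η` by exchanging the states of the two
endpoints of the edge `e = {y,z}`. -/
def exch {d ℓ : ℕ} (y z : Site d ℓ) (η : Config d ℓ) : Config d ℓ :=
  η ∘ Equiv.swap y z

/-! Given a particle at `x`, the other particles form a uniform set of fixed size `k` in the
remaining sites. The Bernoulli–Laplace gap bounds the variance of a function of such a set by
its Dirichlet form over *all* transpositions; it comes from the commutation relation of the up
and down operators of the Boolean lattice, which bounds the norm of the down operator on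
mean-zero functions by induction on the level.

Let `q a b` be the `L²` norm of the change of the function under the transposition `(a b)`. By
invariance of the measure, `(a c) = (a b) (b c) (a b)` gives `q a c ≤ 2 * q a b + q b c`, so that
`q` can be estimated along lattice paths that correct one coordinate at a time. To use such paths
although `x` is missing, glue `x` to a neighbour `x'`, which extends `q` to the whole box with
`q x x' = 0`. The edges at `x` that this introduces are then rerouted: `q x v ≤ q x' v`, and since
`d ≥ 2`, any two neighbours of `x` are joined by a path of length at most `4` that avoids `x`. -/

section BernoulliLaplace

open Equiv
open scoped BigOperators Pointwise

variable {V : Type*} [DecidableEq V]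

/-- The down operator of the Boolean lattice: the sum of `f` over all sets covering `t`. It is
adjoint to `sumErase`. -/
def sumInsert [Fintype V] (f : Finset V → ℝ) (t : Finset V) : ℝ := ∑ a ∈ tᶜ, f (insert a t)

/-- The up operator of the Boolean lattice: the sum of `f` over all sets covered by `s`. It is
adjoint to `sumInsert`. -/
def sumErase (f : Finset V → ℝ) (s : Finset V) : ℝ := ∑ a ∈ s, f (s.erase a)

lemma smul_insert_swap_of_notMem {a b : V} {t : Finset V} (ha : a ∉ t) (hb : b ∉ t) :
    swap a b • insert a t = insert b t := by
  have fixes_t : swap a b • t = t := by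
    refine (image_congr fun v hv => ?_).trans image_id
    exact swap_apply_of_ne_of_ne (ne_of_mem_of_not_mem hv ha) (ne_of_mem_of_not_mem hv hb)
  rw [smul_finset_insert, fixes_t, Perm.smul_def, swap_apply_left]

variable [Fintype V]

lemma cast_card_compl (t : Finset V) : (#tᶜ : ℝ) = Fintype.card V - #t := by
  rw [card_compl, Nat.cast_sub (card_le_univ t)]

lemma sum_card_succ_sum_mem (k : ℕ) (F : Finset V → V → ℝ) :
    ∑ s : Finset V with #s = k + 1, ∑ a ∈ s, F s a =
      ∑ t : Finset V with #t = k, ∑ a ∈ tᶜ, F (insert a t) a := by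
  rw [sum_sigma', sum_sigma']
  refine sum_bij' (fun p _ => ⟨p.1.erase p.2, p.2⟩) (fun p _ => ⟨insert p.2 p.1, p.2⟩)
    ?_ ?_ ?_ ?_ ?_ <;> rintro ⟨s, a⟩ h <;> simp only [mem_sigma, mem_filter_univ, mem_compl] at h
  · simp [card_erase_of_mem h.2, h.1]
  · simp [card_insert_of_notMem h.2, h.1]
  · simp [insert_erase h.2]
  · simp [erase_insert h.2]
  · simp [insert_erase h.2]

lemma sum_mul_sumErase (k : ℕ) (f g : Finset V → ℝ) :
    ∑ s : Finset V with #s = k + 1, f s * sumErase g s =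
      ∑ t : Finset V with #t = k, sumInsert f t * g t := by
  simp only [sumErase, sumInsert, mul_sum, sum_mul]
  rw [sum_card_succ_sum_mem k fun s a => f s * g (s.erase a)]
  refine sum_congr rfl fun t _ => sum_congr rfl fun a ha => ?_
  rw [erase_insert (mem_compl.1 ha)]

lemma sum_sumInsert (k : ℕ) (f : Finset V → ℝ) :
    ∑ t : Finset V with #t = k, sumInsert f t = (k + 1) * ∑ s : Finset V with #s = k + 1, f s := by
  have adjoint := sum_mul_sumErase k f 1
  simp only [Pi.one_apply, mul_one] at adjoint
  rw [← adjoint, mul_sum]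
  refine sum_congr rfl fun s hs => ?_
  simp [sumErase, (mem_filter_univ s).1 hs, mul_comm]

lemma sumInsert_sumErase (g : Finset V → ℝ) (t : Finset V) :
    sumInsert (sumErase g) t =
      sumErase (sumInsert g) t + ((Fintype.card V : ℝ) - 2 * #t) * g t := by
  have insert_first : sumInsert (sumErase g) t =
      #tᶜ * g t + ∑ a ∈ tᶜ, ∑ b ∈ t, g ((insert a t).erase b) := by
    simp only [sumInsert, sumErase]
    rw [← nsmul_eq_mul, ← sum_const, ← sum_add_distrib]
    refine sum_congr rfl fun a ha => ?_
    rw [sum_insert (mem_compl.1 ha), erase_insert (mem_compl.1 ha)]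
  have erase_first : sumErase (sumInsert g) t =
      #t * g t + ∑ b ∈ t, ∑ a ∈ tᶜ, g ((insert a t).erase b) := by
    simp only [sumInsert, sumErase]
    rw [← nsmul_eq_mul, ← sum_const, ← sum_add_distrib]
    refine sum_congr rfl fun b hb => ?_
    rw [compl_erase, sum_insert (by simpa using hb), insert_erase hb]
    refine congrArg _ (sum_congr rfl fun a ha => ?_)
    rw [erase_insert_of_ne (ne_of_mem_of_not_mem hb (mem_compl.1 ha)).symm]
  rw [insert_first, erase_first, cast_card_compl, sum_comm]
  ring

lemma sum_sumErase_sq (k : ℕ) (g : Finset V → ℝ) :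
    ∑ s : Finset V with #s = k + 2, sumErase g s ^ 2 =
      ∑ r : Finset V with #r = k, sumInsert g r ^ 2 +
        ((Fintype.card V : ℝ) - 2 * (k + 1)) * ∑ t : Finset V with #t = k + 1, g t ^ 2 := by
  calc ∑ s : Finset V with #s = k + 2, sumErase g s ^ 2
      = ∑ t : Finset V with #t = k + 1, sumInsert (sumErase g) t * g t := by
        simp only [sq, sum_mul_sumErase]
    _ = ∑ t : Finset V with #t = k + 1, (g t * sumErase (sumInsert g) t +
          ((Fintype.card V : ℝ) - 2 * (k + 1)) * g t ^ 2) := by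
        refine sum_congr rfl fun t ht => ?_
        rw [sumInsert_sumErase, (mem_filter_univ t).1 ht]
        push_cast
        ring
    _ = _ := by
        rw [sum_add_distrib, sum_mul_sumErase, mul_sum]
        simp only [sq]

lemma sq_sum_sumInsert_sq_le (k : ℕ) (f : Finset V → ℝ) :
    (∑ t : Finset V with #t = k, sumInsert f t ^ 2) ^ 2 ≤
      (∑ s : Finset V with #s = k + 1, f s ^ 2) *
        ∑ s : Finset V with #s = k + 1, sumErase (sumInsert f) s ^ 2 := by
  have adjoint := sum_mul_sumErase k f (sumInsert f)
  simp only [← sq] at adjoint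
  rw [← adjoint]
  exact sum_mul_sq_le_sq_mul_sq _ _ _

lemma sum_sumInsert_sq_le {k : ℕ} (hk : k + 1 ≤ Fintype.card V) {f : Finset V → ℝ}
    (hf : ∑ s : Finset V with #s = k + 1, f s = 0) :
    ∑ t : Finset V with #t = k, sumInsert f t ^ 2 ≤
      k * ((Fintype.card V : ℝ) - k - 1) * ∑ s : Finset V with #s = k + 1, f s ^ 2 := by
  have mean_zero := sum_sumInsert k f
  rw [hf, mul_zero] at mean_zero
  induction k generalizing f with
  | zero => simp_all [filter_eq']
  | succ k ih =>
    -- Cauchy–Schwarz and the commutation relation give `X ^ 2 ≤ ‖f‖² (Y + (n - 2 (k + 1)) X)`,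
    -- where `X` and `Y` are the squared norms one and two levels below; then `X` cancels.
    have level_below := ih (by lia) mean_zero (by rw [sum_sumInsert, mean_zero, mul_zero])
    have cauchy_schwarz := sq_sum_sumInsert_sq_le (k + 1) f
    rw [sum_sumErase_sq] at cauchy_schwarz
    have norm_nonneg : 0 ≤ ∑ s : Finset V with #s = k + 2, f s ^ 2 :=
      sum_nonneg fun _ _ => sq_nonneg _
    have image_nonneg : 0 ≤ ∑ t : Finset V with #t = k + 1, sumInsert f t ^ 2 :=
      sum_nonneg fun _ _ => sq_nonneg _
    have card_sub_nonneg : 0 ≤ (Fintype.card V : ℝ) - k - 2 := by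
      have : (k + 1 + 1 : ℝ) ≤ Fintype.card V := mod_cast hk
      linarith
    generalize ∑ t : Finset V with #t = k + 1, sumInsert f t ^ 2 = X at *
    obtain rfl | X_pos := image_nonneg.eq_or_lt
    · push_cast
      have : 0 ≤ (Fintype.card V : ℝ) - (k + 1) - 1 := by linarith
      positivity
    · refine le_of_mul_le_mul_right ?_ X_pos
      push_cast
      nlinarith [mul_le_mul_of_nonneg_left level_below norm_nonneg]

lemma sum_sum_insert_sub_sq (k : ℕ) (f : Finset V → ℝ) :
    ∑ t : Finset V with #t = k, ∑ a ∈ tᶜ, ∑ b ∈ tᶜ, (f (insert b t) - f (insert a t)) ^ 2 =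
      2 * ((Fintype.card V : ℝ) - k) * ((k + 1) * ∑ s : Finset V with #s = k + 1, f s ^ 2) -
        2 * ∑ t : Finset V with #t = k, sumInsert f t ^ 2 := by
  have count : (k + 1) * ∑ s : Finset V with #s = k + 1, f s ^ 2 =
      ∑ t : Finset V with #t = k, ∑ a ∈ tᶜ, f (insert a t) ^ 2 := by
    rw [← sum_card_succ_sum_mem k fun s _ => f s ^ 2, mul_sum]
    refine sum_congr rfl fun s hs => ?_
    simp [(mem_filter_univ s).1 hs]
  rw [count, mul_sum, mul_sum, ← sum_sub_distrib]
  refine sum_congr rfl fun t ht => ?_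
  rw [← (mem_filter_univ t).1 ht, ← cast_card_compl]
  simp only [sumInsert, sub_sq, sum_add_distrib, sum_sub_distrib, sum_const, nsmul_eq_mul,
    ← mul_sum, ← sum_mul]
  ring

lemma sum_insert_sub_sq_le_sum_swap (k : ℕ) (f : Finset V → ℝ) :
    ∑ t : Finset V with #t = k, ∑ a ∈ tᶜ, ∑ b ∈ tᶜ, (f (insert b t) - f (insert a t)) ^ 2 ≤
      ∑ a : V, ∑ b : V, ∑ s : Finset V with #s = k + 1, (f (swap a b • s) - f s) ^ 2 := by
  calc _ = ∑ s : Finset V with #s = k + 1, ∑ a ∈ s, ∑ b ∈ (s.erase a)ᶜ,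
        (f (swap a b • s) - f s) ^ 2 := by
        rw [sum_card_succ_sum_mem k fun s a => ∑ b ∈ (s.erase a)ᶜ, (f (swap a b • s) - f s) ^ 2]
        refine sum_congr rfl fun t _ => sum_congr rfl fun a ha => ?_
        rw [erase_insert (mem_compl.1 ha)]
        refine sum_congr rfl fun b hb => ?_
        rw [smul_insert_swap_of_notMem (mem_compl.1 ha) (mem_compl.1 hb)]
    _ ≤ ∑ s : Finset V with #s = k + 1, ∑ a : V, ∑ b : V, (f (swap a b • s) - f s) ^ 2 := by
        refine sum_le_sum fun s _ => ?_
        refine (sum_le_sum fun a _ => sum_le_univ_sum_of_nonneg fun _ => sq_nonneg _).trans ?_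
        exact sum_le_univ_sum_of_nonneg fun _ => sum_nonneg fun _ _ => sq_nonneg _
    _ = _ := by
        rw [sum_comm]
        exact sum_congr rfl fun a _ => sum_comm

lemma card_mul_sum_sq_le_sum_swap {k : ℕ} (hk : k ≤ Fintype.card V) {f : Finset V → ℝ}
    (hf : ∑ s : Finset V with #s = k, f s = 0) :
    2 * (Fintype.card V : ℝ) * ∑ s : Finset V with #s = k, f s ^ 2 ≤
      ∑ a : V, ∑ b : V, ∑ s : Finset V with #s = k, (f (swap a b • s) - f s) ^ 2 := by
  obtain _ | k := k
  · have f_empty : f ∅ = 0 := by simpa [filter_eq'] using hf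
    simp [filter_eq', f_empty]
  · have contraction := sum_sumInsert_sq_le hk hf
    have variance := sum_sum_insert_sub_sq k f
    refine le_trans ?_ (sum_insert_sub_sq_le_sum_swap k f)
    linarith

theorem card_mul_expect_balance_sq_le (k : ℕ) (f : Set.powersetCard V k → ℝ) :
    (Fintype.card V : ℝ) * 𝔼 s, Fintype.balance f s ^ 2 ≤
      1 / 2 * ∑ a : V, ∑ b : V, 𝔼 s, (f (swap a b • s) - f s) ^ 2 := by
  obtain hk | hk := lt_or_ge (Fintype.card V) k
  · have : IsEmpty (Set.powersetCard V k) :=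
      ⟨fun s => ((card_le_univ s.1).trans_lt hk).ne (Set.powersetCard.card_eq s)⟩
    simp
  · set g : Finset V → ℝ := Function.extend Subtype.val (Fintype.balance f) 0
    have g_coe (s : Set.powersetCard V k) : g s = Fintype.balance f s :=
      Subtype.val_injective.extend_apply _ _ _
    have sum_coe (F : Finset V → ℝ) :
        ∑ s : Finset V with #s = k, F s = ∑ s : Set.powersetCard V k, F s :=
      sum_subtype _ (by simp [Set.powersetCard.mem_iff]) F
    have gap := card_mul_sum_sq_le_sum_swap hk (f := g) (by
      simp only [sum_coe, g_coe, Fintype.sum_balance])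
    simp only [sum_coe, g_coe, ← Set.powersetCard.coe_smul, Fintype.balance_apply,
      sub_sub_sub_cancel_right] at gap
    simp only [Fintype.expect_eq_sum_div_card, ← sum_div, Fintype.balance_apply] at gap ⊢
    rw [mul_div_assoc', mul_div_assoc']
    exact div_le_div_of_nonneg_right (by linarith) (by positivity)

end BernoulliLaplace

section SwapCost

open Equiv
open scoped BigOperators

lemma sqrt_expect_add_sq_le {ι : Type*} [Fintype ι] (u v : ι → ℝ) :
    √(𝔼 i, (u i + v i) ^ 2) ≤ √(𝔼 i, u i ^ 2) + √(𝔼 i, v i ^ 2) := by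
  have rms_eq (w : ι → ℝ) : √(𝔼 i, w i ^ 2) = ‖WithLp.toLp 2 w‖ / √(Fintype.card ι) := by
    simp only [Fintype.expect_eq_sum_div_card, EuclideanSpace.norm_eq, Real.norm_eq_abs, sq_abs,
      Real.sqrt_div' _ (Nat.cast_nonneg _)]
  calc √(𝔼 i, (u i + v i) ^ 2) = ‖WithLp.toLp 2 u + WithLp.toLp 2 v‖ / √(Fintype.card ι) :=
        rms_eq (u + v)
    _ ≤ (‖WithLp.toLp 2 u‖ + ‖WithLp.toLp 2 v‖) / √(Fintype.card ι) := by
        gcongr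
        exact norm_add_le _ _
    _ = √(𝔼 i, u i ^ 2) + √(𝔼 i, v i ^ 2) := by rw [add_div, rms_eq, rms_eq]

/-- The root mean square of the change of `f` under the action of `g` on its argument. -/
def displacement {M X : Type*} [SMul M X] [Fintype X] (f : X → ℝ) (g : M) : ℝ :=
  √(𝔼 x, (f (g • x) - f x) ^ 2)

lemma displacement_sq {M X : Type*} [SMul M X] [Fintype X] (f : X → ℝ) (g : M) :
    displacement f g ^ 2 = 𝔼 x, (f (g • x) - f x) ^ 2 :=
  Real.sq_sqrt (expect_nonneg fun _ _ => sq_nonneg _)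

lemma displacement_nonneg {M X : Type*} [SMul M X] [Fintype X] (f : X → ℝ) (g : M) :
    0 ≤ displacement f g :=
  Real.sqrt_nonneg _

lemma displacement_one {M X : Type*} [Monoid M] [MulAction M X] [Fintype X] (f : X → ℝ) :
    displacement f (1 : M) = 0 := by
  simp [displacement]

lemma displacement_mul_le {G X : Type*} [Group G] [MulAction G X] [Fintype X] (f : X → ℝ)
    (g h : G) : displacement f (g * h) ≤ displacement f g + displacement f h := by
  have shift : displacement f g = √(𝔼 x, (f (g • h • x) - f (h • x)) ^ 2) :=
    congrArg Real.sqrt <| .symm <|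
      Fintype.expect_equiv (MulAction.toPerm h) _ _ fun _ => rfl
  rw [shift]
  simpa only [displacement, mul_smul, sub_add_sub_cancel] using
    sqrt_expect_add_sq_le (fun x => f (g • h • x) - f (h • x)) fun x => f (h • x) - f x

/-- A function of two points with the properties of the cost of a transposition. The triangle
inequality is the one inherited from `(a c) = (a b) (b c) (a b)`. -/
structure IsSwapCost {W : Type*} (q : W → W → ℝ) : Prop where
  self (a : W) : q a a = 0
  symm (a b : W) : q a b = q b a
  triangle (a b c : W) : q a c ≤ 2 * q a b + q b c

namespace IsSwapCost

variable {W : Type*} {q : W → W → ℝ}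

lemma nonneg (hq : IsSwapCost q) (a b : W) : 0 ≤ q a b := by
  linarith [hq.triangle a b a, hq.self a, hq.symm a b]

lemma comp (hq : IsSwapCost q) {W' : Type*} (φ : W' → W) :
    IsSwapCost fun a b => q (φ a) (φ b) where
  self _ := hq.self _
  symm _ _ := hq.symm _ _
  triangle _ _ _ := hq.triangle _ _ _

lemma le_two_mul_sum_range (hq : IsSwapCost q) (c : ℕ → W) (n : ℕ) :
    q (c 0) (c n) ≤ 2 * ∑ j ∈ range n, q (c j) (c (j + 1)) := by
  induction n generalizing c with
  | zero => simp [hq.self]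
  | succ n ih =>
    rw [sum_range_succ']
    linarith [hq.triangle (c 0) (c 1) (c (n + 1)), ih fun j => c (j + 1)]

lemma sq_le_mul_sum_range_sq (hq : IsSwapCost q) (c : ℕ → W) (n : ℕ) :
    q (c 0) (c n) ^ 2 ≤ 4 * n * ∑ j ∈ range n, q (c j) (c (j + 1)) ^ 2 := by
  calc q (c 0) (c n) ^ 2
      ≤ (2 * ∑ j ∈ range n, q (c j) (c (j + 1))) ^ 2 :=
        pow_le_pow_left₀ (hq.nonneg _ _) (hq.le_two_mul_sum_range c n) 2
    _ = 4 * (∑ j ∈ range n, q (c j) (c (j + 1))) ^ 2 := by ring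
    _ ≤ 4 * (#(range n) * ∑ j ∈ range n, q (c j) (c (j + 1)) ^ 2) := by
        gcongr
        exact sq_sum_le_card_mul_sum_sq
    _ = 4 * n * ∑ j ∈ range n, q (c j) (c (j + 1)) ^ 2 := by rw [card_range, mul_assoc]

end IsSwapCost

lemma isSwapCost_displacement_swap {V X : Type*} [DecidableEq V] [MulAction (Perm V) X] [Fintype X]
    (f : X → ℝ) : IsSwapCost fun a b : V => displacement f (swap a b) where
  self a := by rw [swap_self, ← Perm.one_def, displacement_one]
  symm a b := by rw [swap_comm]
  triangle a b c := by
    obtain rfl | hac := eq_or_ne a c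
    · rw [swap_self, ← Perm.one_def, displacement_one]
      linarith [displacement_nonneg f (swap a b), displacement_nonneg f (swap b a)]
    obtain rfl | hbc := eq_or_ne b c
    · linarith [displacement_nonneg f (swap a b), displacement_nonneg f (swap b b)]
    rw [← swap_mul_swap_mul_swap hbc.symm hac.symm, swap_comm b a, swap_comm c b]
    linarith [displacement_mul_le f (swap a b * swap b c) (swap a b),
      displacement_mul_le f (swap a b) (swap b c)]

end SwapCost

section Energy

variable {W : Type*} [Fintype W] {G : SimpleGraph W} {q : W → W → ℝ}

open scoped Classical in
/-- The energy of a cost `q` on a graph: the sum of `q u v ^ 2` over all ordered pairs of adjacent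
vertices, so that every edge is counted twice. -/
def energy (G : SimpleGraph W) (q : W → W → ℝ) : ℝ :=
  ∑ p : W × W with G.Adj p.1 p.2, q p.1 p.2 ^ 2

lemma energy_nonneg (G : SimpleGraph W) (q : W → W → ℝ) : 0 ≤ energy G q :=
  sum_nonneg fun _ _ => sq_nonneg _

lemma sum_sq_le_energy_of_injOn {ι : Type*} {s : Finset ι} {e : ι → W × W}
    (adj : ∀ i ∈ s, G.Adj (e i).1 (e i).2) (inj : Set.InjOn e s) :
    ∑ i ∈ s, q (e i).1 (e i).2 ^ 2 ≤ energy G q := by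
  classical
  rw [← sum_image (f := fun p : W × W => q p.1 p.2 ^ 2) inj]
  refine sum_le_sum_of_subset_of_nonneg (fun p hp => ?_) fun _ _ _ => sq_nonneg _
  obtain ⟨i, hi, rfl⟩ := mem_image.1 hp
  exact (mem_filter_univ _).2 (adj i hi)

lemma energy_comp_le {W' : Type*} [Fintype W'] {H : SimpleGraph W'} {φ : W → W'}
    (inj : Function.Injective φ) (adj : ∀ u v, G.Adj u v → H.Adj (φ u) (φ v))
    (q : W' → W' → ℝ) : energy G (fun u v => q (φ u) (φ v)) ≤ energy H q := by
  classical
  exact sum_sq_le_energy_of_injOn (e := Prod.map φ φ) (fun p hp => adj _ _ (mem_filter.1 hp).2)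
    (inj.prodMap inj).injOn

lemma energy_le_energy_deleteIncidenceSet_add {x : W} {K : ℝ} (hK : 0 ≤ K)
    (symm : ∀ u v, q u v = q v u)
    (bound : ∀ v, G.Adj x v → q x v ^ 2 ≤ K) :
    energy G q ≤ energy (G.deleteIncidenceSet x) q + 2 * (G.neighborSet x).ncard * K := by
  classical
  set N : Finset (W × W) := {p | G.Adj p.1 p.2 ∧ (p.1 = x ∨ p.2 = x)} with hN
  have split : energy G q = energy (G.deleteIncidenceSet x) q + ∑ p ∈ N, q p.1 p.2 ^ 2 := by
    rw [energy, ← sum_filter_not_add_sum_filter _ fun p => p.1 = x ∨ p.2 = x, filter_filter,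
      filter_filter, energy]
    simp only [SimpleGraph.deleteIncidenceSet_adj, not_or, hN, ne_eq]
  have card_N : #N ≤ 2 * (G.neighborSet x).ncard := by
    have cover : N ⊆ (G.neighborFinset x).image (x, ·) ∪ (G.neighborFinset x).image (·, x) := by
      rintro ⟨u, v⟩ huv
      obtain ⟨adj, rfl | rfl⟩ := (mem_filter_univ _).1 huv
      · simp_all
      · simp_all [G.adj_comm]
    rw [two_mul, ← G.coe_neighborFinset, Set.ncard_coe_finset]
    exact (card_le_card cover).trans <|
      (card_union_le _ _).trans <| add_le_add card_image_le card_image_le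
  have bound_N : ∀ p ∈ N, q p.1 p.2 ^ 2 ≤ K := by
    rintro ⟨u, v⟩ huv
    obtain ⟨adj, rfl | rfl⟩ := (mem_filter_univ _).1 huv
    · exact bound v adj
    · exact symm u v ▸ bound u adj.symm
  rw [split, add_le_add_iff_left]
  calc ∑ p ∈ N, q p.1 p.2 ^ 2 ≤ #N * K := by
        simpa only [nsmul_eq_mul] using sum_le_card_nsmul N _ K bound_N
    _ ≤ 2 * (G.neighborSet x).ncard * K := by
        gcongr
        exact_mod_cast card_N

namespace IsSwapCost

lemma sq_le_four_mul_length_mul_energy (hq : IsSwapCost q) {u v : W} (p : G.Walk u v) :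
    q u v ^ 2 ≤ 4 * p.length * energy G q := by
  classical
  have chain := hq.sq_le_mul_sum_range_sq p.bypass.getVert p.bypass.length
  rw [p.bypass.getVert_zero, p.bypass.getVert_length] at chain
  have inj : Set.InjOn (fun j => (p.bypass.getVert j, p.bypass.getVert (j + 1)))
      (range p.bypass.length) := fun i hi j hj hij =>
    p.bypass_isPath.getVert_injOn (mem_range.1 hi).le (mem_range.1 hj).le (Prod.mk.inj hij).1
  have edges : ∑ j ∈ range p.bypass.length,
      q (p.bypass.getVert j) (p.bypass.getVert (j + 1)) ^ 2 ≤ energy G q :=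
    sum_sq_le_energy_of_injOn (fun j hj => p.bypass.adj_getVert_succ (mem_range.1 hj)) inj
  have length_le : (p.bypass.length : ℝ) ≤ p.length := mod_cast p.length_bypass_le_length
  calc q u v ^ 2 ≤ _ := chain
    _ ≤ 4 * p.length * energy G q := by gcongr

lemma sq_le_four_mul_card_mul_energy (hq : IsSwapCost q) (hG : G.Connected) (u v : W) :
    q u v ^ 2 ≤ 4 * Fintype.card W * energy G q := by
  obtain ⟨p, p_path⟩ := (hG u v).exists_isPath
  have length_le : (p.length : ℝ) ≤ Fintype.card W := mod_cast p_path.length_lt.le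
  have := energy_nonneg G q
  calc q u v ^ 2 ≤ _ := hq.sq_le_four_mul_length_mul_energy p
    _ ≤ 4 * Fintype.card W * energy G q := by gcongr

lemma energy_le_mul_energy_deleteIncidenceSet (hq : IsSwapCost q) {x x' : W} (glued : q x x' = 0)
    {m : ℕ} (detour : ∀ v, G.Adj x v → ∃ p : (G.deleteIncidenceSet x).Walk x' v, p.length ≤ m) :
    energy G q ≤ (1 + 8 * m * (G.neighborSet x).ncard) * energy (G.deleteIncidenceSet x) q := by
  have energy_nonneg := energy_nonneg (G.deleteIncidenceSet x) q
  have bound (v : W) (hv : G.Adj x v) :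
      q x v ^ 2 ≤ 4 * m * energy (G.deleteIncidenceSet x) q := by
    obtain ⟨p, p_length⟩ := detour v hv
    have length_le : (p.length : ℝ) ≤ m := mod_cast p_length
    calc q x v ^ 2 ≤ q x' v ^ 2 := by
          have := hq.triangle x x' v
          have := hq.nonneg x v
          gcongr
          linarith
      _ ≤ 4 * p.length * energy (G.deleteIncidenceSet x) q :=
        hq.sq_le_four_mul_length_mul_energy p
      _ ≤ 4 * m * energy (G.deleteIncidenceSet x) q := by gcongr
  calc energy G q ≤ _ := energy_le_energy_deleteIncidenceSet_add (by positivity) hq.symm bound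
    _ = (1 + 8 * m * (G.neighborSet x).ncard) * energy (G.deleteIncidenceSet x) q := by ring

end IsSwapCost

end Energy

section BoxPower

open Function

/-- The Cartesian power of a graph: two points are adjacent when they differ in exactly one
coordinate, and there by an edge of `G`. -/
def boxPower (ι : Type*) [DecidableEq ι] {α : Type*} (G : SimpleGraph α) :
    SimpleGraph (ι → α) where
  Adj u v := ∃ i a, G.Adj (u i) a ∧ v = update u i a
  symm := ⟨by
    rintro u _ ⟨i, a, adj, rfl⟩
    exact ⟨i, u i, by simpa using adj.symm, by simp⟩⟩
  loopless := ⟨by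
    rintro u ⟨i, a, adj, h⟩
    exact adj.ne (by simpa using congrFun h i)⟩

lemma boxPower_adj_update_update {ι α : Type*} [DecidableEq ι] {G : SimpleGraph α} (u : ι → α)
    (i : ι) {r r' : α} (adj : G.Adj r r') :
    (boxPower ι G).Adj (update u i r) (update u i r') :=
  ⟨i, r', by simpa using adj, by simp⟩

section Detour

variable {ι α : Type*} [DecidableEq ι] {G : SimpleGraph α}

lemma ncard_neighborSet_boxPower_le [Fintype ι] [Finite α] {Δ : ℕ}
    (hΔ : ∀ a, (G.neighborSet a).ncard ≤ Δ) (x : ι → α) :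
    ((boxPower ι G).neighborSet x).ncard ≤ Fintype.card ι * Δ := by
  have neighborSet_eq : (boxPower ι G).neighborSet x =
      ⋃ i, update x i '' G.neighborSet (x i) := by
    ext v
    simp [boxPower, eq_comm]
  rw [neighborSet_eq]
  calc _ ≤ ∑ i, (update x i '' G.neighborSet (x i)).ncard :=
        Set.ncard_iUnion_le_of_fintype _
    _ ≤ ∑ _i : ι, Δ := sum_le_sum fun i _ => (Set.ncard_image_le (Set.toFinite _)).trans (hΔ _)
    _ = Fintype.card ι * Δ := by simp

lemma exists_walk_update_update_of_ne {x : ι → α} {i j : ι} (hij : i ≠ j) {a b : α}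
    (ha : G.Adj (x i) a) (hb : G.Adj (x j) b) :
    ∃ p : ((boxPower ι G).deleteIncidenceSet x).Walk (update x i a) (update x j b),
      p.length = 2 := by
  have update_ne (k : ι) {c : α} (hc : G.Adj (x k) c) : update x k c ≠ x :=
    fun h => hc.ne (by simpa using (congrFun h k).symm)
  set corner := update (update x i a) j b
  have corner_ne : corner ≠ x := fun h => hb.ne (by simpa [corner] using (congrFun h j).symm)
  have corner_eq : corner = update (update x j b) i a := update_comm hij ..
  have first : ((boxPower ι G).deleteIncidenceSet x).Adj (update x i a) corner := by
    refine SimpleGraph.deleteIncidenceSet_adj.2 ⟨⟨j, b, ?_, rfl⟩, update_ne i ha, corner_ne⟩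
    rwa [update_of_ne hij.symm]
  have last : ((boxPower ι G).deleteIncidenceSet x).Adj (update x j b) corner := by
    refine SimpleGraph.deleteIncidenceSet_adj.2 ⟨⟨i, a, ?_, corner_eq⟩, update_ne j hb, corner_ne⟩
    rwa [update_of_ne hij]
  exact ⟨.cons first (.cons last.symm .nil), rfl⟩

lemma exists_walk_deleteIncidenceSet_boxPower [Nontrivial ι] (hG : ∀ a, ∃ b, G.Adj a b)
    {x u v : ι → α} (hu : (boxPower ι G).Adj x u) (hv : (boxPower ι G).Adj x v) :
    ∃ p : ((boxPower ι G).deleteIncidenceSet x).Walk u v, p.length ≤ 4 := by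
  obtain ⟨i, a, ha, rfl⟩ := hu
  obtain ⟨j, b, hb, rfl⟩ := hv
  obtain rfl | hij := eq_or_ne i j
  · obtain ⟨k, hki⟩ := exists_ne i
    obtain ⟨c, hc⟩ := hG (x k)
    obtain ⟨p, hp⟩ := exists_walk_update_update_of_ne hki.symm ha hc
    obtain ⟨p', hp'⟩ := exists_walk_update_update_of_ne hki hc hb
    exact ⟨p.append p', by rw [p.length_append, hp, hp']⟩
  · obtain ⟨p, hp⟩ := exists_walk_update_update_of_ne hij ha hb
    exact ⟨p, by lia⟩

end Detour

lemma sum_energy_line_le {ι α : Type*} [Fintype ι] [DecidableEq ι] [Fintype α] (G : SimpleGraph α)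
    (q : (ι → α) → (ι → α) → ℝ) (i : ι) :
    ∑ u, energy G (fun r r' => q (update u i r) (update u i r')) ≤
      Fintype.card α * energy (boxPower ι G) q := by
  classical
  rw [← sum_fiberwise univ fun u => u i, ← nsmul_eq_mul, ← card_univ]
  refine sum_le_card_nsmul _ _ _ fun a _ => ?_
  simp only [energy]
  rw [← sum_product']
  refine sum_sq_le_energy_of_injOn
    (e := fun y : (ι → α) × α × α => (update y.1 i y.2.1, update y.1 i y.2.2))
    (fun y hy => boxPower_adj_update_update _ _ (mem_filter.1 (mem_product.1 hy).2).2) ?_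
  rintro ⟨u, r, r'⟩ hu ⟨v, s, s'⟩ hv huv
  obtain ⟨left_eq, right_eq⟩ := Prod.mk.inj huv
  have hr : r = s := by simpa using congrFun left_eq i
  have hr' : r' = s' := by simpa using congrFun right_eq i
  have hi : u i = v i := by simp_all
  have huv : u = v := by
    rw [← update_eq_self i u, ← update_eq_self i v, ← hi, ← update_idem r, left_eq, update_idem]
  rw [huv, hr, hr']

section Comparison

variable {d : ℕ} {α : Type*}

/-- The point that agrees with `z` on the first `k` coordinates and with `y` on the others: the
`k`-th vertex of the path from `y` to `z` that corrects one coordinate at a time. -/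
def hybrid (y z : Fin d → α) (k : ℕ) : Fin d → α := fun i => if i < k then z i else y i

lemma hybrid_zero (y z : Fin d → α) : hybrid y z 0 = y := by
  ext i
  simp [hybrid]

lemma hybrid_last (y z : Fin d → α) : hybrid y z d = z := by
  ext i
  simp [hybrid]

lemma hybrid_succ (y z : Fin d → α) (k : Fin d) :
    hybrid y z (k + 1) = update (hybrid y z k) k (hybrid z y k k) := by
  ext i
  obtain rfl | hik := eq_or_ne i k
  · simp [hybrid]
  · have : (i : ℕ) < k + 1 ↔ (i : ℕ) < k := by lia
    simp [hybrid, hik, this]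

lemma hybrid_hybrid (y z : Fin d → α) (k : ℕ) : hybrid (hybrid y z k) (hybrid z y k) k = y := by
  ext i
  by_cases h : (i : ℕ) < k <;> simp [hybrid, h]

/-- The involution that exchanges the first `k` coordinates of two points. -/
def hybridEquiv (k : ℕ) : (Fin d → α) × (Fin d → α) ≃ (Fin d → α) × (Fin d → α) where
  toFun p := (hybrid p.1 p.2 k, hybrid p.2 p.1 k)
  invFun p := (hybrid p.1 p.2 k, hybrid p.2 p.1 k)
  left_inv p := by simp only [hybrid_hybrid]
  right_inv p := by simp only [hybrid_hybrid]

variable [Fintype α] {G : SimpleGraph α} {q : (Fin d → α) → (Fin d → α) → ℝ}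

lemma IsSwapCost.sum_sq_hybrid_le (hq : IsSwapCost q) (hG : G.Connected) (k : Fin d) :
    ∑ p : (Fin d → α) × (Fin d → α),
        q (hybrid p.1 p.2 k) (hybrid p.1 p.2 (k + 1)) ^ 2 ≤
      4 * Fintype.card α ^ (d + 2) * energy (boxPower (Fin d) G) q := by
  have line (u w : Fin d → α) : q u (update u k (w k)) ^ 2 ≤
      4 * Fintype.card α * energy G fun r r' => q (update u k r) (update u k r') := by
    simpa using (hq.comp (update u k)).sq_le_four_mul_card_mul_energy hG (u k) (w k)
  calc _ = ∑ p : (Fin d → α) × (Fin d → α), q p.1 (update p.1 k (p.2 k)) ^ 2 :=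
        (hybridEquiv k).sum_comp (fun p => q p.1 (update p.1 k (p.2 k)) ^ 2) ▸
          sum_congr rfl fun p _ => by rw [hybrid_succ]; rfl
    _ ≤ ∑ u : Fin d → α, ∑ _w : Fin d → α,
          4 * Fintype.card α * energy G fun r r' => q (update u k r) (update u k r') := by
        rw [Fintype.sum_prod_type]
        gcongr
        exact line _ _
    _ = 4 * Fintype.card α ^ (d + 1) *
          ∑ u, energy G fun r r' => q (update u k r) (update u k r') := by
        simp only [sum_const, card_univ, Fintype.card_fun, Fintype.card_fin, nsmul_eq_mul,
          ← mul_sum, Nat.cast_pow]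
        ring
    _ ≤ 4 * Fintype.card α ^ (d + 1) * (Fintype.card α * energy (boxPower (Fin d) G) q) := by
        gcongr
        exact sum_energy_line_le G q k
    _ = 4 * Fintype.card α ^ (d + 2) * energy (boxPower (Fin d) G) q := by ring

lemma IsSwapCost.sum_sq_le_energy_boxPower (hq : IsSwapCost q) (hG : G.Connected) :
    ∑ y, ∑ z, q y z ^ 2 ≤
      16 * d ^ 2 * Fintype.card α ^ (d + 2) * energy (boxPower (Fin d) G) q := by
  have path (y z : Fin d → α) : q y z ^ 2 ≤
      4 * d * ∑ k : Fin d, q (hybrid y z k) (hybrid y z (k + 1)) ^ 2 := by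
    simpa only [hybrid_zero, hybrid_last, sum_range] using
      hq.sq_le_mul_sum_range_sq (hybrid y z) d
  calc ∑ y, ∑ z, q y z ^ 2
      ≤ ∑ y, ∑ z, 4 * d * ∑ k : Fin d, q (hybrid y z k) (hybrid y z (k + 1)) ^ 2 := by
        gcongr
        exact path _ _
    _ = 4 * d * ∑ k : Fin d, ∑ p : (Fin d → α) × (Fin d → α),
          q (hybrid p.1 p.2 k) (hybrid p.1 p.2 (k + 1)) ^ 2 := by
        simp only [← mul_sum]
        rw [← Fintype.sum_prod_type' fun y z =>
          ∑ k : Fin d, q (hybrid y z k) (hybrid y z (k + 1)) ^ 2, sum_comm]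
    _ ≤ 4 * d * ∑ _k : Fin d,
          4 * Fintype.card α ^ (d + 2) * energy (boxPower (Fin d) G) q := by
        gcongr
        exact hq.sum_sq_hybrid_le hG _
    _ = 16 * d ^ 2 * Fintype.card α ^ (d + 2) * energy (boxPower (Fin d) G) q := by
        rw [sum_const, card_univ, Fintype.card_fin, nsmul_eq_mul]
        ring

end Comparison

lemma IsSwapCost.sum_sq_le_energy_deleteIncidenceSet_boxPower {d Δ : ℕ} {α : Type*} [Fintype α]
    [Nontrivial α] {G : SimpleGraph α} {q : (Fin d → α) → (Fin d → α) → ℝ} (hq : IsSwapCost q)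
    (hd : 2 ≤ d) (hG : G.Connected) (hΔ : ∀ a, (G.neighborSet a).ncard ≤ Δ) {x x' : Fin d → α}
    (adj : (boxPower (Fin d) G).Adj x x') (glued : q x x' = 0) :
    ∑ y, ∑ z, q y z ^ 2 ≤ 16 * d ^ 2 * (1 + 32 * d * Δ) * Fintype.card α ^ (d + 2) *
      energy ((boxPower (Fin d) G).deleteIncidenceSet x) q := by
  have : Nontrivial (Fin d) := Fin.nontrivial_iff_two_le.2 hd
  have degree_le : (((boxPower (Fin d) G).neighborSet x).ncard : ℝ) ≤ d * Δ := by
    simpa using (Nat.cast_le (α := ℝ)).2 (ncard_neighborSet_boxPower_le hΔ x)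
  have puncture := hq.energy_le_mul_energy_deleteIncidenceSet glued fun _ =>
    exists_walk_deleteIncidenceSet_boxPower hG.preconnected.exists_adj_of_nontrivial adj
  have := energy_nonneg ((boxPower (Fin d) G).deleteIncidenceSet x) q
  calc _ ≤ 16 * d ^ 2 * Fintype.card α ^ (d + 2) * energy (boxPower (Fin d) G) q :=
        hq.sum_sq_le_energy_boxPower hG
    _ ≤ 16 * d ^ 2 * Fintype.card α ^ (d + 2) * ((1 + 8 * (4 : ℕ) * (d * Δ)) *
          energy ((boxPower (Fin d) G).deleteIncidenceSet x) q) := by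
        gcongr
        exact puncture.trans (by gcongr)
    _ = _ := by
        push_cast
        ring

lemma ncard_neighborSet_pathGraph_le {n : ℕ} (a : Fin n) :
    ((SimpleGraph.pathGraph n).neighborSet a).ncard ≤ 2 := by
  have neighbors : Fin.val '' (SimpleGraph.pathGraph n).neighborSet a ⊆ {a.val - 1, a.val + 1} := by
    rintro _ ⟨b, hb, rfl⟩
    obtain h | h := SimpleGraph.pathGraph_adj.1 hb <;> grind
  rw [← Set.ncard_image_of_injective _ Fin.val_injective]
  exact (Set.ncard_le_ncard neighbors).trans <|
    (Set.ncard_insert_le _ _).trans (by rw [Set.ncard_singleton])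

end BoxPower

section Sites

open Equiv
open scoped BigOperators

variable {d ℓ : ℕ}

/-- The nearest-neighbour graph of the box `B_ℓ`. -/
def siteGraph (d ℓ : ℕ) : SimpleGraph (Site d ℓ) where
  Adj y z := SiteAdj y z
  symm := ⟨fun y z h => by simpa only [SiteAdj, sub_sq_comm] using h⟩
  loopless := ⟨fun y => by simp [SiteAdj]⟩

/-- The box `B_ℓ` as a power of an interval: every coordinate is shifted by `ℓ`. -/
def gridEquiv (d ℓ : ℕ) : (Fin d → Fin (2 * ℓ + 1)) ≃ Site d ℓ where
  toFun u := ⟨fun i => (u i : ℤ) - ℓ, mem_Icc.2 ⟨fun i => by grind, fun i => by grind⟩⟩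
  invFun y i := ⟨(y.1 i + ℓ).toNat, by
    have upper := (mem_Icc.1 y.2).2 i
    grind⟩
  left_inv u := by
    ext i
    simp
  right_inv y := by
    ext i
    have lower := (mem_Icc.1 y.2).1 i
    grind

lemma siteGraph_adj_gridEquiv {u v : Fin d → Fin (2 * ℓ + 1)}
    (h : (boxPower (Fin d) (SimpleGraph.pathGraph (2 * ℓ + 1))).Adj u v) :
    (siteGraph d ℓ).Adj (gridEquiv d ℓ u) (gridEquiv d ℓ v) := by
  obtain ⟨i, a, adj, rfl⟩ := h
  have step : ((u i : ℤ) - a) ^ 2 = 1 := by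
    obtain h | h := SimpleGraph.pathGraph_adj.1 adj <;> grind
  change ∑ j, ((u j : ℤ) - ℓ - ((Function.update u i a j : ℤ) - ℓ)) ^ 2 = 1
  rw [sum_eq_single i (fun j _ hj => by simp [hj]) (by simp)]
  simpa using step

lemma card_site_ne_add_one (x : Site d ℓ) : Fintype.card {y // y ≠ x} + 1 = (2 * ℓ + 1) ^ d := by
  have card_site : Fintype.card (Site d ℓ) = (2 * ℓ + 1) ^ d := by
    rw [← Fintype.card_congr (gridEquiv d ℓ)]
    simp
  rw [Fintype.card_subtype, filter_ne', card_erase_add_one (mem_univ x), card_univ, card_site]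

section Pinned

variable (x : Site d ℓ)

/-- The configuration with a particle at `x` whose other particles occupy the set `s`. -/
def pinnedConfig (s : Finset {y // y ≠ x}) : Config d ℓ := fun z => ∀ h : z ≠ x, ⟨z, h⟩ ∈ s

variable {x}

lemma pinnedConfig_eq_true_iff {s : Finset {y // y ≠ x}} {z : Site d ℓ} :
    pinnedConfig x s z = true ↔ ∀ h : z ≠ x, ⟨z, h⟩ ∈ s :=
  decide_eq_true_iff

lemma pinnedConfig_self (s : Finset {y // y ≠ x}) : pinnedConfig x s x = true :=
  pinnedConfig_eq_true_iff.2 fun h => (h rfl).elim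

lemma pinnedConfig_coe_eq_true_iff {s : Finset {y // y ≠ x}} {v : {y // y ≠ x}} :
    pinnedConfig x s v = true ↔ v ∈ s :=
  pinnedConfig_eq_true_iff.trans (forall_prop_of_true v.2)

lemma pinnedConfig_injective : Function.Injective (pinnedConfig x) := fun s t hst => by
  ext v
  rw [← pinnedConfig_coe_eq_true_iff, hst, pinnedConfig_coe_eq_true_iff]

lemma exists_pinnedConfig_eq {η : Config d ℓ} (hη : η x = true) : ∃ s, pinnedConfig x s = η := by
  refine ⟨({v : {y // y ≠ x} | η v = true} : Finset _), funext fun z => Bool.eq_iff_iff.2 ?_⟩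
  rw [pinnedConfig_eq_true_iff]
  obtain rfl | hz := eq_or_ne z x <;> simp_all

lemma numParticles_pinnedConfig (s : Finset {y // y ≠ x}) :
    numParticles (pinnedConfig x s) = #s + 1 := by
  have occupied : ({z | pinnedConfig x s z = true} : Finset (Site d ℓ)) =
      insert x (s.map (Function.Embedding.subtype _)) := by
    ext z
    obtain rfl | hz := eq_or_ne z x <;> simp_all [pinnedConfig_eq_true_iff]
  rw [numParticles, occupied, card_insert_of_notMem (by simp), card_map]

open scoped Pointwise in
lemma exch_pinnedConfig (v w : {y // y ≠ x}) (s : Finset {y // y ≠ x}) :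
    exch v w (pinnedConfig x s) = pinnedConfig x (swap v w • s) := by
  ext z
  rw [exch, Function.comp_apply, Bool.eq_iff_iff]
  obtain rfl | hz := eq_or_ne z x
  · rw [swap_apply_of_ne_of_ne v.2.symm w.2.symm]
    simp only [pinnedConfig_self]
  · lift z to {y // y ≠ x} using hz
    rw [Subtype.val_injective.swap_apply, pinnedConfig_coe_eq_true_iff,
      pinnedConfig_coe_eq_true_iff, ← inv_smul_mem_iff, swap_inv, Perm.smul_def]

lemma pinnedExp_eq_expect {ρ : ℝ} {k : ℕ} (hk : ⌊ρ * (#(Box d ℓ) : ℝ)⌋ = k + 1)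
    (g : Config d ℓ → ℝ) :
    pinnedExp d ℓ ρ x g = 𝔼 s : Set.powersetCard {y // y ≠ x} k, g (pinnedConfig x s) := by
  have mem_slice (s : Finset {y // y ≠ x}) : pinnedConfig x s ∈ pinnedSlice d ℓ ρ x ↔ #s = k := by
    simp only [pinnedSlice, mem_filter_univ, numParticles_pinnedConfig, pinnedConfig_self, hk]
    lia
  rw [pinnedExp, ← expect_eq_sum_div_card]
  refine Eq.symm <| expect_nbij (fun s : Set.powersetCard {y // y ≠ x} k => pinnedConfig x s)
    (fun s _ => ?_) (fun _ _ => rfl) ?_ ?_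
  · exact (mem_slice s).2 (Set.powersetCard.card_eq s)
  · exact (pinnedConfig_injective.comp Subtype.val_injective).injOn
  · intro η hη
    obtain ⟨s, rfl⟩ := exists_pinnedConfig_eq ((mem_filter_univ η).1 hη).2
    exact ⟨⟨s, (mem_slice s).1 hη⟩, by simp, rfl⟩

end Pinned

section Glue

variable {W : Type*} [DecidableEq W] {x : W}

/-- The retraction onto the points different from `x` that glues `x` to `x'`. -/
def collapse (x' : {w // w ≠ x}) (w : W) : {w // w ≠ x} := if h : w = x then x' else ⟨w, h⟩

lemma collapse_self (x' : {w // w ≠ x}) : collapse x' x = x' := dif_pos rfl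

lemma collapse_coe (x' v : {w // w ≠ x}) : collapse x' v = v := dif_neg v.2

lemma sum_sum_le_sum_sum_collapse [Fintype W] (x' : {w // w ≠ x})
    {F : {w // w ≠ x} → {w // w ≠ x} → ℝ} (F_nonneg : ∀ a b, 0 ≤ F a b) :
    ∑ a, ∑ b, F a b ≤ ∑ y, ∑ z, F (collapse x' y) (collapse x' z) := by
  have restrict {g : {w // w ≠ x} → ℝ} (g_nonneg : ∀ a, 0 ≤ g a) :
      ∑ a, g a ≤ ∑ w, g (collapse x' w) := by
    rw [← Fintype.sum_subtype_add_sum_subtype (· ≠ x) fun w => g (collapse x' w)]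
    simp only [collapse_coe]
    exact le_add_of_nonneg_right (sum_nonneg fun _ _ => g_nonneg _)
  calc ∑ a, ∑ b, F a b ≤ ∑ a, ∑ z, F a (collapse x' z) :=
        sum_le_sum fun a _ => restrict (F_nonneg a)
    _ ≤ ∑ y, ∑ z, F (collapse x' y) (collapse x' z) :=
        restrict fun a => sum_nonneg fun _ _ => F_nonneg _ _

end Glue

lemma energy_gridEquiv_le (u : Fin d → Fin (2 * ℓ + 1)) (q : Site d ℓ → Site d ℓ → ℝ) :
    energy ((boxPower (Fin d) (SimpleGraph.pathGraph (2 * ℓ + 1))).deleteIncidenceSet u)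
        (fun v w => q (gridEquiv d ℓ v) (gridEquiv d ℓ w)) ≤
      energy ((siteGraph d ℓ).deleteIncidenceSet (gridEquiv d ℓ u)) q := by
  refine energy_comp_le (gridEquiv d ℓ).injective (fun v w h => ?_) q
  simp only [SimpleGraph.deleteIncidenceSet_adj] at h ⊢
  exact ⟨siteGraph_adj_gridEquiv h.1, by simpa only [(gridEquiv d ℓ).injective.ne_iff] using h.2⟩

lemma exists_ne_forall_sum_sq_le_energy_siteGraph (hd : 2 ≤ d) (hℓ : 1 ≤ ℓ) (x : Site d ℓ) :
    ∃ x' ≠ x, ∀ q : Site d ℓ → Site d ℓ → ℝ, IsSwapCost q → q x x' = 0 →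
      ∑ y, ∑ z, q y z ^ 2 ≤ 16 * d ^ 2 * (1 + 64 * d) * (2 * ℓ + 1) ^ (d + 2) *
        energy ((siteGraph d ℓ).deleteIncidenceSet x) q := by
  obtain ⟨u, rfl⟩ := (gridEquiv d ℓ).surjective x
  have : Nontrivial (Fin (2 * ℓ + 1)) := Fin.nontrivial_iff_two_le.2 (by lia)
  have connected := SimpleGraph.pathGraph_connected (2 * ℓ)
  obtain ⟨a, ha⟩ := connected.preconnected.exists_adj_of_nontrivial (u ⟨0, by lia⟩)
  set u' := Function.update u ⟨0, by lia⟩ a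
  have adj : (boxPower (Fin d) (SimpleGraph.pathGraph (2 * ℓ + 1))).Adj u u' := ⟨_, a, ha, rfl⟩
  refine ⟨gridEquiv d ℓ u', (gridEquiv d ℓ).injective.ne adj.ne', fun q hq glued => ?_⟩
  have comparison :=
    (hq.comp (gridEquiv d ℓ)).sum_sq_le_energy_deleteIncidenceSet_boxPower hd connected
      ncard_neighborSet_pathGraph_le adj glued
  calc ∑ y, ∑ z, q y z ^ 2
      = ∑ v, ∑ w, q (gridEquiv d ℓ v) (gridEquiv d ℓ w) ^ 2 := by
        simp only [← Equiv.sum_comp (gridEquiv d ℓ)]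
    _ ≤ _ := comparison
    _ ≤ 16 * d ^ 2 * (1 + 32 * d * (2 : ℕ)) * Fintype.card (Fin (2 * ℓ + 1)) ^ (d + 2) *
          energy ((siteGraph d ℓ).deleteIncidenceSet (gridEquiv d ℓ u)) q := by
        gcongr
        exact energy_gridEquiv_le u q
    _ = _ := by
        rw [Fintype.card_fin]
        push_cast
        ring

lemma exists_forall_sum_sq_le_energy_collapse (hd : 2 ≤ d) (hℓ : 1 ≤ ℓ) (x : Site d ℓ) :
    ∃ x' : {y // y ≠ x}, ∀ r : {y // y ≠ x} → {y // y ≠ x} → ℝ, IsSwapCost r →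
      ∑ a, ∑ b, r a b ^ 2 ≤ 16 * d ^ 2 * (1 + 64 * d) * (2 * ℓ + 1) ^ (d + 2) *
        energy ((siteGraph d ℓ).deleteIncidenceSet x)
          fun y z => r (collapse x' y) (collapse x' z) := by
  obtain ⟨x', hx', comparison⟩ := exists_ne_forall_sum_sq_le_energy_siteGraph hd hℓ x
  refine ⟨⟨x', hx'⟩, fun r hr => ?_⟩
  have glued : r (collapse ⟨x', hx'⟩ x) (collapse ⟨x', hx'⟩ x') = 0 := by
    rw [collapse_self, collapse_coe ⟨x', hx'⟩ ⟨x', hx'⟩, hr.self]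
  exact (sum_sum_le_sum_sum_collapse ⟨x', hx'⟩ fun _ _ => sq_nonneg _).trans <|
    comparison _ (hr.comp (collapse ⟨x', hx'⟩)) glued

lemma pow_add_two_le_mul_card_site_ne (hd : d ≠ 0) (hℓ : 1 ≤ ℓ) (x : Site d ℓ) :
    (2 * ℓ + 1 : ℝ) ^ (d + 2) ≤ 18 * Fintype.card {y // y ≠ x} * ℓ ^ 2 := by
  have volume_le : (2 * ℓ + 1) ^ d ≤ 2 * Fintype.card {y // y ≠ x} := by
    have := card_site_ne_add_one x
    have := Nat.le_self_pow hd (2 * ℓ + 1)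
    lia
  have side_le : 2 * ℓ + 1 ≤ 3 * ℓ := by lia
  calc (2 * ℓ + 1 : ℝ) ^ (d + 2) = (2 * ℓ + 1) ^ d * (2 * ℓ + 1) ^ 2 := pow_add _ _ _
    _ ≤ (2 * Fintype.card {y // y ≠ x}) * (3 * ℓ) ^ 2 := by
        gcongr
        · exact_mod_cast volume_le
        · exact_mod_cast side_le
    _ = 18 * Fintype.card {y // y ≠ x} * ℓ ^ 2 := by ring

section PinnedExpectation

variable {ρ : ℝ} {k : ℕ} {x : Site d ℓ}

lemma pinnedExp_sub_pinnedExp_sq (hk : ⌊ρ * (#(Box d ℓ) : ℝ)⌋ = k + 1) (f : Config d ℓ → ℝ) :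
    pinnedExp d ℓ ρ x (fun η => (f η - pinnedExp d ℓ ρ x f) ^ 2) =
      𝔼 s, Fintype.balance
        (fun s : Set.powersetCard {y // y ≠ x} k => f (pinnedConfig x s)) s ^ 2 := by
  simp only [pinnedExp_eq_expect hk, Fintype.balance_apply]

lemma pinnedExp_exch_sub_sq (hk : ⌊ρ * (#(Box d ℓ) : ℝ)⌋ = k + 1) (f : Config d ℓ → ℝ)
    (v w : {y // y ≠ x}) :
    pinnedExp d ℓ ρ x (fun η => (f (exch v w η) - f η) ^ 2) =
      displacement (fun s : Set.powersetCard {y // y ≠ x} k => f (pinnedConfig x s))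
        (swap v w) ^ 2 := by
  simp only [pinnedExp_eq_expect hk, exch_pinnedConfig, displacement_sq,
    Set.powersetCard.coe_smul]

lemma sum_sum_pinnedExp_exch_sub_sq (hk : ⌊ρ * (#(Box d ℓ) : ℝ)⌋ = k + 1)
    (f : Config d ℓ → ℝ) (x' : {y // y ≠ x}) :
    (∑ y, ∑ z, if SiteAdj y z ∧ y ≠ x ∧ z ≠ x then
        pinnedExp d ℓ ρ x (fun η => (f (exch y z η) - f η) ^ 2) else 0) =
      energy ((siteGraph d ℓ).deleteIncidenceSet x) fun y z =>
        displacement (fun s : Set.powersetCard {y // y ≠ x} k => f (pinnedConfig x s))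
          (swap (collapse x' y) (collapse x' z)) := by
  rw [energy, sum_filter, Fintype.sum_prod_type]
  refine sum_congr rfl fun y _ => sum_congr rfl fun z _ => ?_
  have adj_iff : ((siteGraph d ℓ).deleteIncidenceSet x).Adj y z ↔ SiteAdj y z ∧ y ≠ x ∧ z ≠ x :=
    SimpleGraph.deleteIncidenceSet_adj
  by_cases h : SiteAdj y z ∧ y ≠ x ∧ z ≠ x
  · rw [if_pos h, if_pos (adj_iff.2 h)]
    obtain ⟨-, hy, hz⟩ := h
    lift y to {y // y ≠ x} using hy
    lift z to {y // y ≠ x} using hz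
    rw [collapse_coe, collapse_coe, pinnedExp_exch_sub_sq hk]
  · rw [if_neg h, if_neg (mt adj_iff.1 h)]

end PinnedExpectation

end Sites

/-- **Spectral gap for the Kawasaki dynamics with one site pinned.**
Fix `d ≥ 2`.  There exists `C_K(d) < ∞` such that for every `ρ ∈ [0,1]` and `ℓ ≥ 1` with
`⌊ρ |B_ℓ|⌋ ≥ 1`, every site `x ∈ B_ℓ` and every `f : {0,1}^{B_ℓ} → ℝ`,
`⟨(f − ⟨f | η(x)=1⟩_{ℓ,ρ})² | η(x)=1⟩_{ℓ,ρ}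
   ≤ C_K ℓ² Σ_{e ∈ 𝔹_ℓ, e ∌ x} ⟨(f(η^e) − f(η))² | η(x)=1⟩_{ℓ,ρ}`,
where the Dirichlet sum runs only over edges not containing `x`.  The sum over unordered
nearest-neighbour edges `e = {y,z} ⊆ B_ℓ` with `x ∉ e` is written as half the sum over
ordered pairs of adjacent sites, both different from `x`. -/
theorem kawasaki_spectral_gap_pinned (d : ℕ) (hd : 2 ≤ d) :
    ∃ C : ℝ, 0 < C ∧ ∀ ρ ∈ Set.Icc (0 : ℝ) 1, ∀ ℓ : ℕ, 1 ≤ ℓ →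
      1 ≤ ⌊ρ * ((Box d ℓ).card : ℝ)⌋ → ∀ x : Site d ℓ, ∀ f : Config d ℓ → ℝ,
        pinnedExp d ℓ ρ x (fun η => (f η - pinnedExp d ℓ ρ x f) ^ 2) ≤
          C * (ℓ : ℝ) ^ 2 *
            ((1 : ℝ) / 2 * ∑ y : Site d ℓ, ∑ z : Site d ℓ,
              if SiteAdj y z ∧ y ≠ x ∧ z ≠ x then
                pinnedExp d ℓ ρ x (fun η => (f (exch y z η) - f η) ^ 2)
              else 0) := by
  have d_pos : 0 < d := by lia
  refine ⟨288 * d ^ 2 * (1 + 64 * d), by positivity, fun ρ _ ℓ hℓ occupied x f => ?_⟩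
  obtain ⟨k, hk⟩ := Int.exists_add_of_le occupied
  rw [add_comm] at hk
  obtain ⟨x', comparison⟩ := exists_forall_sum_sq_le_energy_collapse hd hℓ x
  rw [pinnedExp_sub_pinnedExp_sq hk, sum_sum_pinnedExp_exch_sub_sq hk f x']
  set g := fun s : Set.powersetCard {y // y ≠ x} k => f (pinnedConfig x s)
  set E := energy ((siteGraph d ℓ).deleteIncidenceSet x) fun y z =>
    displacement g (Equiv.swap (collapse x' y) (collapse x' z))
  have card_pos : (0 : ℝ) < Fintype.card {y // y ≠ x} :=
    mod_cast Fintype.card_pos_iff.2 ⟨x'⟩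
  have E_nonneg : 0 ≤ E := energy_nonneg _ _
  refine le_of_mul_le_mul_left ?_ card_pos
  calc _ ≤ 1 / 2 * ∑ a, ∑ b, displacement g (Equiv.swap a b) ^ 2 := by
        simpa only [displacement_sq] using card_mul_expect_balance_sq_le k g
    _ ≤ 1 / 2 * (16 * d ^ 2 * (1 + 64 * d) * (2 * ℓ + 1) ^ (d + 2) * E) := by
        gcongr
        exact comparison _ (isSwapCost_displacement_swap g)
    _ ≤ 1 / 2 * (16 * d ^ 2 * (1 + 64 * d) * (18 * Fintype.card {y // y ≠ x} * ℓ ^ 2) * E) := by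
        gcongr
        exact pow_add_two_le_mul_card_site_ne d_pos.ne' hℓ x
    _ = _ := by ring

end
end
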